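/- arXiv:2409.12860 — 5 statements merged into one kernel-verified Lean document; each statement's English description precedes it below -/
import Mathlib

section
/- Let n ≥ 1 be an integer, let r_0 < r_1 < ... < r_n be real numbers, and let c_0, c_1, ..., c_n be non-zero complex numbers. Then the set of complex numbers z satisfying ∑_{k=0}^n c_k · exp(r_k · z) = 0 is infinite. -/
/-!
Let `f` be an exponential sum with finitely many zeroes. Dividing them out gives `f = P h` with
`P` a polynomial and `h` entire and zero-free; `h` inherits exponential type from `f`, so
`h = exp g` with `Re g` of at most linear growth, and by Borel–Carathéodory and Liouville `g` is
affine, say `g z = a z + b`. Multiplying `f` by `exp (-a z)` now turns it into a polynomial.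
Differentiating that identity often enough kills the polynomial but, by linear independence of
exponentials, none of the terms of the sum with frequency other than `a`. So `f` has at most one
term.
-/

open Bornology Complex Filter Function Polynomial

section Exponentials

theorem linearIndependent_exp_mul : LinearIndependent ℂ fun a z : ℂ ↦ exp (a * z) := by
  let χ (a : ℂ) : Multiplicative ℂ →* ℂ :=
    expMonoidHom.comp (AddMonoidHom.toMultiplicative (AddMonoidHom.mulLeft a))
  have χ_injective : Injective χ := by
    intro a b hab
    have h_exp : (fun z ↦ exp (a * z)) = fun z ↦ exp (b * z) :=
      funext fun z ↦ DFunLike.congr_fun hab (Multiplicative.ofAdd z)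
    have h_deriv (c : ℂ) : deriv (fun z ↦ exp (c * z)) 0 = c := by
      simpa using ((hasDerivAt_id (0 : ℂ)).const_mul c).cexp.deriv
    rw [← h_deriv a, h_exp, h_deriv b]
  exact (linearIndependent_monoidHom (Multiplicative ℂ) ℂ).comp χ χ_injective

variable {ι : Type*} [Fintype ι] {r c : ι → ℂ}

theorem sum_mul_pow_mul_exp_eq_eval_iterate_derivative {P : ℂ[X]}
    (h : ∀ z, ∑ k, c k * exp (r k * z) = P.eval z) (N : ℕ) (z : ℂ) :
    ∑ k, c k * r k ^ N * exp (r k * z) = (derivative^[N] P).eval z := by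
  induction N generalizing z with
  | zero => simpa using h z
  | succ N ih =>
    have h_sum : HasDerivAt (fun z ↦ ∑ k, c k * r k ^ N * exp (r k * z))
        (∑ k, c k * r k ^ (N + 1) * exp (r k * z)) z := by
      refine HasDerivAt.fun_sum fun k _ ↦ ?_
      refine (((hasDerivAt_id z).const_mul (r k)).cexp.const_mul (c k * r k ^ N)).congr_deriv ?_
      simp only [id]
      ring
    rw [funext ih] at h_sum
    rw [iterate_succ_apply']
    exact h_sum.unique (Polynomial.hasDerivAt _ z)

theorem frequency_eq_zero_of_sum_exp_eq_eval (hr : Injective r) {P : ℂ[X]}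
    (h : ∀ z, ∑ k, c k * exp (r k * z) = P.eval z) {k : ι} (hk : c k ≠ 0) : r k = 0 := by
  have h_sum : ∑ k, (c k * r k ^ (P.natDegree + 1)) • (fun z ↦ exp (r k * z)) = 0 := by
    ext z
    simpa [iterate_derivative_eq_zero P.natDegree.lt_succ_self] using
      sum_mul_pow_mul_exp_eq_eval_iterate_derivative h (P.natDegree + 1) z
  have h_coeff := Fintype.linearIndependent_iff.mp (linearIndependent_exp_mul.comp r hr) _ h_sum k
  exact eq_zero_of_pow_eq_zero ((mul_eq_zero.mp h_coeff).resolve_left hk)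

end Exponentials

section ZeroDivision

variable {E : Type*} [NormedAddCommGroup E] [NormedSpace ℂ E] [CompleteSpace E] {f : ℂ → E}

theorem differentiable_iterate_dslope (hf : Differentiable ℂ f) (a : ℂ) (n : ℕ) :
    Differentiable ℂ ((swap dslope a)^[n] f) := by
  induction n with
  | zero => exact hf
  | succ n ih =>
    rw [iterate_succ_apply', ← differentiableOn_univ]
    exact (Complex.differentiableOn_dslope univ_mem).mpr ih.differentiableOn

theorem exists_eq_pow_sub_smul_of_differentiable (hf : Differentiable ℂ f) (hf₀ : f ≠ 0) (a : ℂ) :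
    ∃ (n : ℕ) (h : ℂ → E), Differentiable ℂ h ∧ h a ≠ 0 ∧ ∀ z, f z = (z - a) ^ n • h z := by
  obtain ⟨p, hp⟩ := hf.analyticAt a
  have hp₀ : p ≠ 0 := by
    intro hp_zero
    have h_univ : AnalyticOnNhd ℂ f Set.univ := fun z _ ↦ hf.analyticAt z
    exact hf₀ (h_univ.eq_of_eventuallyEq (g := 0) (fun _ _ ↦ analyticAt_const)
      (hp.locally_zero_iff.mpr hp_zero))
  exact ⟨p.order, (swap dslope a)^[p.order] f, differentiable_iterate_dslope hf a _,
    hp.iterate_dslope_fslope_ne_zero hp₀, hp.eq_pow_order_mul_iterate_dslope⟩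

theorem exists_eq_polynomial_smul_of_finite_zeros (hf : Differentiable ℂ f) (hf₀ : f ≠ 0)
    (hfin : {z | f z = 0}.Finite) :
    ∃ (P : ℂ[X]) (h : ℂ → E), Differentiable ℂ h ∧ (∀ z, h z ≠ 0) ∧ ∀ z, f z = P.eval z • h z := by
  obtain ⟨s, hs⟩ : ∃ s : Finset ℂ, ∀ z, f z = 0 → z ∈ s := ⟨hfin.toFinset, by simp⟩
  clear hfin
  induction s using Finset.induction_on generalizing f with
  | empty => exact ⟨1, f, hf, fun z hz ↦ by simpa using hs z hz, by simp⟩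
  | insert a s _ ih =>
    obtain ⟨n, g, hg, hga, hfg⟩ := exists_eq_pow_sub_smul_of_differentiable hf hf₀ a
    have hgs (z : ℂ) (hz : g z = 0) : z ∈ s := by
      refine Finset.mem_of_mem_insert_of_ne (hs z (by rw [hfg, hz, smul_zero])) ?_
      rintro rfl
      exact hga hz
    obtain ⟨P, h, hh, hh₀, hgh⟩ := ih hg (fun hg₀ ↦ hga (congrFun hg₀ a)) hgs
    exact ⟨(X - C a) ^ n * P, h, hh, hh₀, fun z ↦ by simp [hfg, hgh, mul_smul]⟩

end ZeroDivision

section Growth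

theorem isBounded_range_of_isBigO_cocompact {X E : Type*} [TopologicalSpace X]
    [SeminormedAddCommGroup E] {f : X → E} (hf : Continuous f)
    (hO : f =O[cocompact X] fun _ ↦ (1 : ℝ)) : IsBounded (Set.range f) := by
  obtain ⟨C, hC⟩ := hO.bound
  obtain ⟨K, hK, hKC⟩ := mem_cocompact.mp hC
  have h_compl : IsBounded (f '' Kᶜ) :=
    isBounded_iff_forall_norm_le.mpr ⟨C, by rintro _ ⟨z, hz, rfl⟩; simpa using hKC hz⟩
  refine ((hK.image hf).isBounded.union h_compl).subset ?_
  rw [← Set.image_union, Set.union_compl_self, Set.image_univ]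

theorem isBigO_one_eval_cocompact {𝕜 : Type*} [NormedField 𝕜] [ProperSpace 𝕜] {P : 𝕜[X]}
    (hP : P ≠ 0) : (fun _ ↦ (1 : 𝕜)) =O[cocompact 𝕜] fun z ↦ P.eval z := by
  rcases le_or_gt P.degree 0 with hdeg | hdeg
  · rw [eq_C_of_degree_le_zero hdeg] at hP ⊢
    simpa using Asymptotics.isBigO_const_const (1 : 𝕜) (C_ne_zero.mp hP) _
  · have h_norm := P.tendsto_norm_atTop hdeg tendsto_norm_cocompact_atTop
    exact ((Asymptotics.isLittleO_const_left (c := (1 : 𝕜))).mpr (.inr h_norm)).isBigO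

variable {g : ℂ → ℂ}

theorem norm_sub_apply_zero_le_of_re_le (hg : Differentiable ℂ g) {A B : ℝ}
    (hre : ∀ z, (g z).re ≤ A + B * ‖z‖) (z : ℂ) :
    ‖g z - g 0‖ ≤ 2 * (|A| + ‖g 0‖ + 1 + |B| * (2 * ‖z‖)) := by
  rcases eq_or_ne z 0 with rfl | hz
  · simp only [sub_self, norm_zero]
    positivity
  have hz_pos : 0 < ‖z‖ := norm_pos_iff.mpr hz
  set M := |A| + ‖g 0‖ + 1 + |B| * (2 * ‖z‖)
  have h_maps : Set.MapsTo (fun w ↦ g w - g 0) (Metric.ball 0 (2 * ‖z‖)) {w | w.re ≤ M} := by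
    intro w hw
    have hw : ‖w‖ ≤ 2 * ‖z‖ := (mem_ball_zero_iff.mp hw).le
    calc (g w - g 0).re ≤ A + B * ‖w‖ + ‖g 0‖ := by
          linarith [hre w, neg_le_of_abs_le (abs_re_le_norm (g 0)), sub_re (g w) (g 0)]
      _ ≤ |A| + |B| * (2 * ‖z‖) + ‖g 0‖ := by gcongr <;> exact le_abs_self _
      _ ≤ M := by linarith
  have h_bc := borelCaratheodory_zero (by positivity) (hg.sub_const (g 0)).differentiableOn h_maps
    (by positivity) (mem_ball_zero_iff.mpr (by linarith)) (sub_self _)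
  rwa [show 2 * ‖z‖ - ‖z‖ = ‖z‖ by ring, mul_div_cancel_right₀ _ hz_pos.ne'] at h_bc

theorem exists_eq_mul_add_of_re_le (hg : Differentiable ℂ g) {A B : ℝ}
    (hre : ∀ z, (g z).re ≤ A + B * ‖z‖) : ∃ a b : ℂ, ∀ z, g z = a * z + b := by
  have hd : Differentiable ℂ (dslope g 0) := differentiable_iterate_dslope hg 0 1
  have h_bdd : IsBounded (Set.range (dslope g 0)) := by
    refine isBounded_range_of_isBigO_cocompact hd.continuous
      (.of_bound (2 * (|A| + ‖g 0‖ + 1 + |B| * 2)) ?_)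
    filter_upwards [tendsto_norm_cocompact_atTop.eventually_ge_atTop 1] with z hz
    have hz_pos : 0 < ‖z‖ := one_pos.trans_le hz
    rw [dslope_of_ne _ (norm_pos_iff.mp hz_pos), slope_def_field, sub_zero, norm_div, norm_one,
      mul_one, div_le_iff₀ hz_pos]
    have h_const : 0 ≤ |A| + ‖g 0‖ + 1 := by positivity
    nlinarith [norm_sub_apply_zero_le_of_re_le hg hre z]
  refine ⟨dslope g 0 0, g 0, fun z ↦ ?_⟩
  have h_slope := sub_smul_dslope g 0 z
  rw [hd.apply_eq_apply_of_bounded h_bdd z 0, sub_zero, smul_eq_mul] at h_slope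
  linear_combination -h_slope

end Growth

theorem exists_eq_exp_of_forall_ne_zero {h : ℂ → ℂ} (hh : Differentiable ℂ h) (hh₀ : ∀ z, h z ≠ 0) :
    ∃ g : ℂ → ℂ, Differentiable ℂ g ∧ ∀ z, h z = exp (g z) := by
  have h_deriv : Differentiable ℂ (deriv h) :=
    differentiableOn_univ.mp (hh.differentiableOn.deriv isOpen_univ)
  obtain ⟨g, hg₀, hg⟩ :=
    (h_deriv.div hh hh₀).isExactOn_univ.with_val_at 0 (log (h 0))
  have h_quot (z : ℂ) : HasDerivAt (fun z ↦ h z * exp (-g z)) 0 z := by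
    refine ((hh z).hasDerivAt.mul (hg z trivial).neg.cexp).congr_deriv ?_
    have hz : h z ≠ 0 := hh₀ z
    simp only [Pi.div_apply]
    field_simp
    ring
  refine ⟨g, fun z ↦ (hg z trivial).differentiableAt, fun z ↦ ?_⟩
  have h_const : h z * exp (-g z) = h 0 * exp (-g 0) :=
    is_const_of_deriv_eq_zero (fun z ↦ (h_quot z).differentiableAt) (fun z ↦ (h_quot z).deriv) z 0
  rw [hg₀, exp_neg (log _), exp_log (hh₀ 0), mul_inv_cancel₀ (hh₀ 0), exp_neg] at h_const
  exact (mul_inv_eq_one₀ (exp_ne_zero _)).mp h_const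

/-- A function on the complex plane is of exponential type if `‖f z‖ ≤ A * exp (B * ‖z‖)` for some
constants `A` and `B`; no holomorphy is built in. -/
def IsExponentialType (f : ℂ → ℂ) : Prop :=
  ∃ A B : ℝ, ∀ z, ‖f z‖ ≤ A * Real.exp (B * ‖z‖)

namespace IsExponentialType

variable {f h : ℂ → ℂ}

theorem sum_exp {ι : Type*} [Fintype ι] (r c : ι → ℂ) :
    IsExponentialType fun z ↦ ∑ k, c k * exp (r k * z) := by
  refine ⟨∑ k, ‖c k‖, ∑ k, ‖r k‖, fun z ↦ ?_⟩
  rw [Finset.sum_mul]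
  refine norm_sum_le_of_le _ fun k _ ↦ ?_
  have h_exponent : ‖r k * z‖ ≤ (∑ i, ‖r i‖) * ‖z‖ := by
    rw [norm_mul]
    gcongr
    exact Finset.single_le_sum (f := fun i ↦ ‖r i‖) (fun i _ ↦ norm_nonneg _) (Finset.mem_univ k)
  rw [norm_mul]
  gcongr
  exact (norm_exp_le_exp_norm _).trans (Real.exp_le_exp.mpr h_exponent)

theorem of_eval_mul {P : ℂ[X]} (hP : P ≠ 0) (hh : Continuous h)
    (hPh : IsExponentialType fun z ↦ P.eval z * h z) : IsExponentialType h := by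
  obtain ⟨A, B, hAB⟩ := hPh
  let F (z : ℂ) : ℂ := h z * Real.exp (-(B * ‖z‖))
  have hF_norm (z : ℂ) : ‖F z‖ = ‖h z‖ / Real.exp (B * ‖z‖) := by
    rw [norm_mul, norm_real, Real.norm_of_nonneg (Real.exp_nonneg _), Real.exp_neg, div_eq_mul_inv]
  have hPF (z : ℂ) : ‖P.eval z * F z‖ ≤ A * ‖(1 : ℝ)‖ := by
    rw [norm_mul, hF_norm, ← mul_div_assoc, ← norm_mul, norm_one, mul_one]
    exact (div_le_iff₀ (Real.exp_pos _)).mpr (hAB z)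
  have hF : F =O[cocompact ℂ] fun _ ↦ (1 : ℝ) := by
    calc F =O[cocompact ℂ] fun z ↦ P.eval z * F z := by
          simpa using (isBigO_one_eval_cocompact hP).mul (Asymptotics.isBigO_refl F _)
      _ =O[cocompact ℂ] fun _ ↦ (1 : ℝ) := .of_bound A (.of_forall hPF)
  obtain ⟨C, hC⟩ := isBounded_iff_forall_norm_le.mp
    (isBounded_range_of_isBigO_cocompact (f := F) (by fun_prop) hF)
  refine ⟨C, B, fun z ↦ ?_⟩
  have hFC : ‖F z‖ ≤ C := hC _ ⟨z, rfl⟩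
  rwa [hF_norm, div_le_iff₀ (Real.exp_pos _)] at hFC

theorem exists_eq_exp_mul_add (h_type : IsExponentialType h) (hh : Differentiable ℂ h)
    (hh₀ : ∀ z, h z ≠ 0) : ∃ a b : ℂ, ∀ z, h z = exp (a * z + b) := by
  obtain ⟨A, B, hAB⟩ := h_type
  obtain ⟨g, hg, hhg⟩ := exists_eq_exp_of_forall_ne_zero hh hh₀
  have hre (z : ℂ) : (g z).re ≤ A + B * ‖z‖ := by
    rw [← Real.exp_le_exp]
    calc Real.exp (g z).re = ‖h z‖ := by rw [hhg, norm_exp]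
      _ ≤ A * Real.exp (B * ‖z‖) := hAB z
      _ ≤ Real.exp A * Real.exp (B * ‖z‖) := by gcongr; linarith [Real.add_one_le_exp A]
      _ = Real.exp (A + B * ‖z‖) := (Real.exp_add _ _).symm
  obtain ⟨a, b, hgab⟩ := exists_eq_mul_add_of_re_le hg hre
  exact ⟨a, b, fun z ↦ by rw [hhg, hgab]⟩

theorem exists_eq_eval_mul_exp_of_finite_zeros (h_type : IsExponentialType f)
    (hf : Differentiable ℂ f) (hfin : {z | f z = 0}.Finite) :
    ∃ (P : ℂ[X]) (a : ℂ), ∀ z, f z = P.eval z * exp (a * z) := by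
  rcases eq_or_ne f 0 with rfl | hf₀
  · exact ⟨0, 0, by simp⟩
  obtain ⟨P, h, hh, hh₀, hfh⟩ := exists_eq_polynomial_smul_of_finite_zeros hf hf₀ hfin
  have hP : P ≠ 0 := by
    rintro rfl
    exact hf₀ (funext fun z ↦ by simp [hfh])
  have h_type' : IsExponentialType h :=
    .of_eval_mul hP hh.continuous (by simpa only [← smul_eq_mul, ← hfh])
  obtain ⟨a, b, hab⟩ := h_type'.exists_eq_exp_mul_add hh hh₀
  refine ⟨P * C (exp b), a, fun z ↦ ?_⟩
  rw [hfh, hab, exp_add, eval_mul, eval_C, smul_eq_mul]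
  ring

end IsExponentialType

theorem exp_sum_infinite_zeroes_general {ι : Type*} [Fintype ι] {r c : ι → ℂ} (hr : Injective r)
    (hc : (support c).Nontrivial) : {z : ℂ | ∑ k, c k * exp (r k * z) = 0}.Infinite := by
  intro hfin
  obtain ⟨P, a, hPa⟩ := (IsExponentialType.sum_exp r c).exists_eq_eval_mul_exp_of_finite_zeros
    (by fun_prop) hfin
  have h_poly (z : ℂ) : ∑ k, c k * exp ((r k - a) * z) = P.eval z := by
    simp_rw [sub_mul, exp_sub, ← mul_div_assoc, ← Finset.sum_div]
    rw [hPa, mul_div_cancel_right₀ _ (exp_ne_zero _)]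
  have h_shift : Injective fun k ↦ r k - a := sub_left_injective.comp hr
  have h_freq {k : ι} (hk : c k ≠ 0) : r k = a :=
    sub_eq_zero.mp (frequency_eq_zero_of_sum_exp_eq_eval h_shift h_poly hk)
  obtain ⟨i, hi, j, hj, hij⟩ := hc
  exact hij (hr ((h_freq hi).trans (h_freq hj).symm))

/-- Exponential sums in one variable have infinitely many zeroes. -/
theorem exp_sum_infinite_zeroes (n : ℕ) (hn : 1 ≤ n)
    (r : Fin (n + 1) → ℝ) (hr : StrictMono r)
    (c : Fin (n + 1) → ℂ) (hc : ∀ k, c k ≠ 0) :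
    {z : ℂ | ∑ k, c k * Complex.exp (r k * z) = 0}.Infinite :=
  exp_sum_infinite_zeroes_general (ofReal_injective.comp hr.injective)
    ⟨0, hc 0, Fin.last n, hc _, by simpa [Fin.ext_iff] using (by omega : 0 ≠ n)⟩
end

section
/- Let U ⊆ ℂ be a nonempty open connected set and let f_1, ..., f_n : U → ℂ be holomorphic functions such that no non-trivial ℚ-linear combination of f_1, ..., f_n is constant on U (i.e., if q_1, ..., q_n ∈ ℚ are not all zero then q_1 f_1 + ... + q_n f_n is non-constant on U). Then the transcendence degree over ℂ of the ℂ-subalgebra of functions on U generated by f_1, ..., f_n, exp∘f_1, ..., exp∘f_n is at least n; equivalently, some n of the 2n functions f_1, ..., f_n, exp∘f_1, ..., exp∘f_n are algebraically independent over ℂ. -/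
/-!
Taylor expansion at a point of `U` turns the functions into elements `xᵢ`, `yᵢ = exp xᵢ` of the
differential field `K` of Laurent series, whose constants are `ℂ`. If fewer than `n` of the `xᵢ`,
`yᵢ` are algebraically independent, then the `n` differential forms `ωᵢ = dyᵢ / yᵢ - dxᵢ` are
linearly dependent over `K`. The Lie derivative along the derivation of `K` kills every `ωᵢ`, so a
shortest relation has constant coefficients: `∑ cᵢ dyᵢ / yᵢ` is exact for some nonzero `c`.

Choose a nonzero integer vector `m` orthogonal to all integer relations among the `cᵢ`, and suppose
that `z = ∏ yᵢ ^ mᵢ` is transcendental. Then `K` embeds into the algebraic closure of some `E⸨X⸩`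
with `z ↦ X`. Exact forms have no residue and the residue of `dyᵢ / yᵢ` is an order `kᵢ`, so
`∑ cᵢ kᵢ = 0`, hence `∑ mᵢ kᵢ = 0`; but `∑ mᵢ kᵢ` is the residue of `dz / z`, which is positive.
So `z` is constant, and taking its logarithmic derivative shows that `∑ mᵢ fᵢ` is constant.
-/

namespace AxSchanuel

open Polynomial IntermediateField
open scoped LaurentSeries Differential RatFunc IntermediateField.algebraAdjoinAdjoin

section Derivation

lemma exists_derivation_extension {R A B : Type*} [CommRing R] [CommRing A] [CommRing B]
    [Algebra R A] [Algebra R B] [Algebra A B] [IsScalarTower R A B] [Algebra.FormallyEtale A B]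
    (d : Derivation R A B) : ∃ D : Derivation R B B, ∀ a, D (algebraMap A B a) = d a := by
  let base := (KaehlerDifferential.tensorKaehlerEquivOfFormallyEtale R A B).symm
  refine ⟨(d.liftKaehlerDifferential.liftBaseChange B ∘ₗ base.toLinearMap).compDer
    (KaehlerDifferential.D R B), fun a => ?_⟩
  have hbase := KaehlerDifferential.tensorKaehlerEquivOfFormallyEtale_symm_D_algebraMap R A B a
  simp [base, hbase]

/-- An `R`-derivation killing the image of `S`, as an `S`-derivation: this enlarges the field of
constants over which a derivation is considered. -/
def derivationOfAlgebraMapEqZero {R S A M : Type*} [CommRing R] [CommRing S] [CommRing A]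
    [Algebra R A] [Algebra S A] [AddCommGroup M] [Module R M] [Module S M] [Module A M]
    [IsScalarTower S A M] (D : Derivation R A M) (hD : ∀ s, D (algebraMap S A s) = 0) :
    Derivation S A M :=
  Derivation.mk'
    { toFun := D
      map_add' := D.map_add
      map_smul' s a := by
        simp [Algebra.smul_def, hD] }
    D.leibniz

lemma derivation_eq_zero_of_isAlgebraic {F K M : Type*} [Field F] [Field K] [CharZero F]
    [Algebra F K] [AddCommGroup M] [Module F M] [Module K M] [IsScalarTower F K M]
    (D : Derivation F K M) {x : K} (hx : IsAlgebraic F x) : D x = 0 := by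
  have hroot : aeval x (derivative (minpoly F x)) • D x = 0 := by
    rw [← D.map_aeval, minpoly.aeval, map_zero]
  have hsep := (minpoly.irreducible hx.isIntegral).separable
  exact (smul_eq_zero.1 hroot).resolve_left
    (hsep.aeval_derivative_ne_zero (minpoly.aeval F x))

end Derivation

section TraceNorm

variable {F : Type*} [Field F] [CharZero F] [Differential F]

lemma exists_differentialAlgebra_of_isAlgebraic (K : Type*) [Field K] [Algebra F K]
    [Algebra.IsAlgebraic F K] : ∃ _ : Differential K, DifferentialAlgebra F K := by
  have : Algebra.FormallyEtale F K := .of_isSeparable F K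
  let d : Derivation ℤ F K :=
    ((Algebra.linearMap F K).compDer (Differential.deriv : Derivation ℤ F F))
  obtain ⟨D, hD⟩ := exists_derivation_extension d
  let _ : Differential K := ⟨D⟩
  exact ⟨‹_›, ⟨hD⟩⟩

variable {L : Type*} [Field L] [Algebra F L] [FiniteDimensional F L] [Differential L]
  [DifferentialAlgebra F L]

lemma deriv_trace (v : L) : (Algebra.trace F L v)′ = Algebra.trace F L v′ := by
  obtain ⟨_, _⟩ := exists_differentialAlgebra_of_isAlgebraic (F := F) (AlgebraicClosure F)
  apply (algebraMap F (AlgebraicClosure F)).injective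
  rw [← deriv_algebraMap, trace_eq_sum_embeddings (AlgebraicClosure F),
    trace_eq_sum_embeddings (AlgebraicClosure F), map_sum]
  exact Finset.sum_congr rfl fun σ _ => (Differential.algHom_deriv' σ σ.injective v).symm

lemma logDeriv_norm {u : L} (hu : u ≠ 0) :
    Differential.logDeriv (Algebra.norm F u) = Algebra.trace F L (Differential.logDeriv u) := by
  obtain ⟨_, _⟩ := exists_differentialAlgebra_of_isAlgebraic (F := F) (AlgebraicClosure F)
  apply (algebraMap F (AlgebraicClosure F)).injective
  rw [← Differential.logDeriv_algebraMap, Algebra.norm_eq_prod_embeddings,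
    trace_eq_sum_embeddings (AlgebraicClosure F),
    Differential.logDeriv_prod _ _ _ fun σ _ => by simpa using hu]
  refine Finset.sum_congr rfl fun σ _ => ?_
  rw [Differential.logDeriv, Differential.logDeriv, map_div₀,
    Differential.algHom_deriv' σ σ.injective u]

end TraceNorm

section LaurentSeries

variable {R : Type*} [CommRing R]

/-- The derivation given by an additive map satisfying the Leibniz rule. It is stated for an
abstract ring `A` because `ℤ` acts on `R⸨X⸩` through two instances that do not unify, one
from Hahn series and one from the ring structure. -/
def derivationOfLeibniz {A : Type*} [CommRing A] (d : A →+ A)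
    (leibniz : ∀ a b, d (a * b) = a * d b + b * d a) : Derivation ℤ A A :=
  Derivation.mk' d.toIntLinearMap leibniz

instance [CharZero R] : CharZero R⸨X⸩ :=
  charZero_of_injective_ringHom (HahnSeries.C_injective (Γ := ℤ))

/-- Laurent series with the Euler operator `X · d/dX` as derivation. Unlike `d/dX` it does not
enlarge supports, and the residue of `df / f` is the constant coefficient of `logDeriv f`. -/
noncomputable instance : Differential R⸨X⸩ where
  deriv := derivationOfLeibniz
    { toFun f := HahnSeries.mk (fun n => (n : R) * f.coeff n)
        (f.isPWO_support.mono fun _ hn hf => hn (by simp [hf]))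
      map_zero' := by ext; simp
      map_add' f g := by ext; simp [mul_add] }
    fun f g => by
      ext n
      simp only [AddMonoidHom.coe_mk, ZeroHom.coe_mk, HahnSeries.coeff_add, mul_comm g]
      rw [HahnSeries.coeff_mul, HahnSeries.coeff_mul_right' g.isPWO_support,
        HahnSeries.coeff_mul_left' f.isPWO_support, Finset.mul_sum, ← Finset.sum_add_distrib]
      · refine Finset.sum_congr rfl fun ij hij => ?_
        rw [← (Finset.mem_antidiagonal.1 hij).2.2]
        push_cast
        ring
      all_goals exact fun _ hm h0 => hm (by simp [h0])

@[simp]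
lemma coeff_deriv (f : R⸨X⸩) (n : ℤ) : (f′).coeff n = n * f.coeff n := rfl

lemma deriv_single (n : ℤ) (a : R) :
    (HahnSeries.single n a : R⸨X⸩)′ = HahnSeries.single n (n * a) := by
  ext m
  by_cases h : m = n
  · simp [h]
  · simp [HahnSeries.coeff_single_of_ne h]

lemma deriv_coe (φ : PowerSeries R) :
    (φ : R⸨X⸩)′ = ((PowerSeries.X * PowerSeries.derivative R φ : PowerSeries R) : R⸨X⸩) := by
  ext n
  rw [coeff_deriv, PowerSeries.coeff_coe, PowerSeries.coeff_coe]
  split_ifs with hn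
  · rw [mul_zero]
  · obtain ⟨k, rfl⟩ := Int.eq_ofNat_of_zero_le (not_lt.1 hn)
    cases k with
    | zero => simp
    | succ k =>
      simp only [Int.natAbs_natCast, PowerSeries.coeff_succ_X_mul, PowerSeries.coeff_derivative]
      push_cast
      ring

end LaurentSeries

section LaurentSeriesField

variable {F : Type*} [Field F]

lemma eq_C_of_deriv_eq_zero [CharZero F] {f : F⸨X⸩} (hf : f′ = 0) :
    f = HahnSeries.C (f.coeff 0) := by
  ext n
  by_cases hn : n = 0
  · simp [hn]
  · have hn' : (n : F) * f.coeff n = 0 := by rw [← coeff_deriv, hf, HahnSeries.coeff_zero]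
    rw [HahnSeries.C_apply, HahnSeries.coeff_single_of_ne hn]
    exact (mul_eq_zero.1 hn').resolve_left (Int.cast_ne_zero.2 hn)

lemma deriv_eq_zero_iff_mem_range_algebraMap [CharZero F] {f : F⸨X⸩} :
    f′ = 0 ↔ f ∈ (algebraMap F F⸨X⸩).range := by
  refine ⟨fun h => ⟨f.coeff 0, ?_⟩, ?_⟩
  · rw [LaurentSeries.algebraMap_apply, ← eq_C_of_deriv_eq_zero h]
  · rintro ⟨a, rfl⟩
    rw [LaurentSeries.algebraMap_apply, HahnSeries.C_apply, deriv_single]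
    simp

lemma coeff_zero_logDeriv {f : F⸨X⸩} (hf : f ≠ 0) :
    (Differential.logDeriv f).coeff 0 = (f.order : F) := by
  set φ := f.powerSeriesPart
  have hφ0 : PowerSeries.constantCoeff φ ≠ 0 := by
    rw [← PowerSeries.coeff_zero_eq_constantCoeff_apply, LaurentSeries.powerSeriesPart_coeff]
    simpa [HahnSeries.coeff_order_eq_zero] using hf
  have hfφ : HahnSeries.single f.order 1 * (φ : F⸨X⸩) = f := f.single_order_mul_powerSeriesPart
  have hφ : (φ : F⸨X⸩) ≠ 0 := right_ne_zero_of_mul (hfφ.trans_ne hf)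
  have hφinv : (φ : F⸨X⸩)⁻¹ = (φ⁻¹ : PowerSeries F) :=
    inv_eq_of_mul_eq_one_right <| by
      rw [← PowerSeries.coe_mul, PowerSeries.mul_inv_cancel _ hφ0, PowerSeries.coe_one]
  have hφlog : (Differential.logDeriv (φ : F⸨X⸩)).coeff 0 = 0 := by
    rw [Differential.logDeriv, deriv_coe, div_eq_mul_inv, hφinv, ← PowerSeries.coe_mul, mul_assoc,
      PowerSeries.coeff_coe]
    simp
  have hlog_single : Differential.logDeriv (HahnSeries.single f.order (1 : F)) =
      HahnSeries.C (f.order : F) := by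
    rw [Differential.logDeriv, deriv_single, div_eq_iff (by simp), HahnSeries.C_apply,
      HahnSeries.single_mul_single, zero_add]
  have hsum := congrArg (HahnSeries.coeff · 0) (Differential.logDeriv_mul
    (HahnSeries.single f.order (1 : F)) (φ : F⸨X⸩) (by simp) hφ)
  simpa only [hfφ, hlog_single, HahnSeries.coeff_add, hφlog, HahnSeries.C_apply,
    HahnSeries.coeff_single_same, add_zero] using hsum

lemma logDeriv_X :
    Differential.logDeriv (HahnSeries.single 1 1 : F⸨X⸩) = 1 := by
  rw [Differential.logDeriv, deriv_single, Int.cast_one, mul_one, div_self (by simp)]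

end LaurentSeriesField

section LogDeriv

variable {K : Type*} [Field K] [Differential K]

lemma logDeriv_zpow (a : K) (m : ℤ) :
    Differential.logDeriv (a ^ m) = m * Differential.logDeriv a := by
  rcases eq_or_ne a 0 with rfl | ha
  · rcases eq_or_ne m 0 with rfl | hm <;> simp [*, zero_zpow]
  · rw [Differential.logDeriv, Derivation.leibniz_zpow, zpow_sub_one₀ ha, Differential.logDeriv]
    have := zpow_ne_zero m ha
    simp only [smul_eq_mul, zsmul_eq_mul]
    field_simp

lemma logDeriv_prod_zpow {ι : Type*} [Fintype ι] {y : ι → K} (hy : ∀ i, y i ≠ 0) (m : ι → ℤ) :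
    Differential.logDeriv (∏ i, y i ^ m i) = ∑ i, m i * Differential.logDeriv (y i) := by
  rw [Differential.logDeriv_prod _ _ _ fun i _ => zpow_ne_zero _ (hy i)]
  exact Finset.sum_congr rfl fun i _ => logDeriv_zpow (y i) (m i)

end LogDeriv

section Residue

variable {F : Type*} [Field F]

section FiniteExtension

variable {L : Type*} [Field L] [Algebra F⸨X⸩ L]

variable (F L) in
/-- The residue at `X = 0` of the differential form `v · dX / X` on a finite extension `L` of
`F⸨X⸩`, defined as the residue of its trace to `F⸨X⸩`. For an infinite extension it is zero, as the
trace is. -/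
noncomputable def residue : L →+ F :=
  (HahnSeries.coeff.addMonoidHom 0).comp (Algebra.trace F⸨X⸩ L).toAddMonoidHom

lemma residue_apply (v : L) : residue F L v = (Algebra.trace F⸨X⸩ L v).coeff 0 := rfl

lemma residue_C_mul (a : F) (v : L) :
    residue F L (algebraMap F⸨X⸩ L (HahnSeries.C a) * v) = a * residue F L v := by
  rw [residue_apply, ← Algebra.smul_def, map_smul, smul_eq_mul, HahnSeries.C_mul_eq_smul]
  rfl

lemma residue_one : residue F L 1 = Module.finrank F⸨X⸩ L := by
  rw [residue_apply, ← map_one (algebraMap F⸨X⸩ L), Algebra.trace_algebraMap]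
  exact (map_nsmul (HahnSeries.coeff.addMonoidHom 0) _ _).trans (by simp)

variable [CharZero F] [FiniteDimensional F⸨X⸩ L] [Differential L] [DifferentialAlgebra F⸨X⸩ L]

lemma residue_deriv (v : L) : residue F L v′ = 0 := by
  rw [residue_apply, ← deriv_trace, coeff_deriv, Int.cast_zero, zero_mul]

lemma residue_logDeriv {u : L} (hu : u ≠ 0) :
    residue F L (Differential.logDeriv u) = (Algebra.norm F⸨X⸩ u).order := by
  rw [residue_apply, ← logDeriv_norm hu,
    coeff_zero_logDeriv ((Algebra.norm_ne_zero_iff (R := F⸨X⸩)).2 hu)]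

end FiniteExtension

variable [CharZero F] {Ω : Type*} [Field Ω] [Algebra F⸨X⸩ Ω] [Algebra.IsAlgebraic F⸨X⸩ Ω]
  [Differential Ω] [DifferentialAlgebra F⸨X⸩ Ω] {ι : Type*} [Fintype ι]

lemma prod_zpow_ne_X {c : ι → F} {m : ι → ℤ}
    (hm : ∀ k : ι → ℤ, ∑ i, k i • c i = 0 → ∑ i, m i * k i = 0)
    {y : ι → Ω} (hy : ∀ i, y i ≠ 0) {v : Ω}
    (h : ∑ i, algebraMap F⸨X⸩ Ω (HahnSeries.C (c i)) * Differential.logDeriv (y i) = v′) :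
    ∏ i, y i ^ m i ≠ algebraMap F⸨X⸩ Ω (HahnSeries.single 1 1) := by
  intro hX
  let L := IntermediateField.adjoin F⸨X⸩ (Set.range y ∪ {v})
  have : FiniteDimensional F⸨X⸩ L :=
    have : Finite (Set.range y ∪ {v} : Set Ω) := (Set.finite_range y).union (Set.finite_singleton v)
    IntermediateField.finiteDimensional_adjoin fun x _ => Algebra.IsIntegral.isIntegral x
  let yL (i : ι) : L := ⟨y i, IntermediateField.subset_adjoin _ _ (Or.inl ⟨i, rfl⟩)⟩
  let vL : L := ⟨v, IntermediateField.subset_adjoin _ _ (Or.inr rfl)⟩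
  have hyL (i : ι) : yL i ≠ 0 := fun h0 => hy i (congrArg Subtype.val h0)
  have hlog (i : ι) :
      Differential.logDeriv (y i) = algebraMap L Ω (Differential.logDeriv (yL i)) :=
    Differential.logDeriv_algebraMap (yL i)
  have hc : ∑ i, algebraMap F⸨X⸩ L (HahnSeries.C (c i)) * Differential.logDeriv (yL i) = vL′ := by
    apply (algebraMap L Ω).injective
    rw [← deriv_algebraMap, show algebraMap L Ω vL = v from rfl, map_sum]
    simpa only [map_mul, ← hlog, ← IsScalarTower.algebraMap_apply] using h
  have hm1 : ∑ i, (m i : L) * Differential.logDeriv (yL i) = 1 := by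
    apply (algebraMap L Ω).injective
    simp only [map_sum, map_mul, map_intCast, map_one, ← hlog]
    rw [← logDeriv_prod_zpow hy, hX, Differential.logDeriv_algebraMap, logDeriv_X, map_one]
  have hc_residue := congrArg (residue F L) hc
  simp only [map_sum, residue_C_mul, residue_deriv, residue_logDeriv (hyL _)] at hc_residue
  have hm_residue := congrArg (residue F L) hm1
  simp only [map_sum, ← zsmul_eq_mul, map_zsmul, residue_logDeriv (hyL _), residue_one]
    at hm_residue
  have hm_order := hm _ (by simpa only [zsmul_eq_mul, mul_comm] using hc_residue)
  have hfinrank : (Module.finrank F⸨X⸩ L : F) = 0 := by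
    rw [← hm_residue]
    simpa only [zsmul_eq_mul] using mod_cast congrArg (Int.cast : ℤ → F) hm_order
  exact Module.finrank_pos.ne' (Nat.cast_eq_zero.1 hfinrank)

end Residue

section Place

variable {C K : Type*} [Field C] [Field K] [Algebra C K]

lemma exists_transcendental_over_isAlgebraic_adjoin {z : K} (hz : Transcendental C z) :
    ∃ E : IntermediateField C K, Transcendental E z ∧ Algebra.IsAlgebraic E⟮z⟯ K := by
  have hindep : AlgebraicIndepOn C (id : K → K) {z} :=
    (algebraicIndependent_unique_type_iff (ι := ({z} : Set K)) (x := fun i => (i : K))).2 hz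
  obtain ⟨B, hzB, hB⟩ := exists_isTranscendenceBasis_superset hindep
  have hins : insert z (B \ {z}) = B := by
    simp [Set.insert_eq_of_mem (Set.singleton_subset_iff.1 hzB)]
  refine ⟨adjoin C (B \ {z}), fun halg => ?_, ?_⟩
  · have hB' : AlgebraicIndepOn C (id : K → K) (insert z (B \ {z})) := hins.symm ▸ hB.1
    have htr := ((AlgebraicIndepOn.insert_iff (by simp)).1 hB').2
    rw [Set.image_id] at htr
    exact htr ((IsFractionRing.isAlgebraic_iff (Algebra.adjoin C (B \ {z})) _ K).2 halg)
  · have halg := hB.isAlgebraic_field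
    rw [Subtype.range_coe, ← hins, Set.insert_eq, Set.union_comm, ← adjoin_adjoin_left] at halg
    exact halg

lemma exists_ringHom_comp_algebraMap_eq {Ω : Type*} [Field Ω] [IsAlgClosed Ω]
    [Algebra.IsAlgebraic C K] (ψ : C →+* Ω) : ∃ φ : K →+* Ω, φ.comp (algebraMap C K) = ψ := by
  let := ψ.toAlgebra
  exact ⟨(IsAlgClosed.lift : K →ₐ[C] Ω), AlgHom.comp_algebraMap _⟩

lemma exists_ringHom_laurentSeries {z : K} (hz : Transcendental C z) :
    ∃ (E : IntermediateField C K) (φ : K →+* AlgebraicClosure E⸨X⸩),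
      (∀ a : E, φ a = algebraMap E⸨X⸩ _ (HahnSeries.C a)) ∧
        φ z = algebraMap E⸨X⸩ _ (HahnSeries.single 1 1) := by
  obtain ⟨E, hzE, _⟩ := exists_transcendental_over_isAlgebraic_adjoin hz
  obtain ⟨φ, hφ⟩ := exists_ringHom_comp_algebraMap_eq (K := K) <|
    (algebraMap E⸨X⸩ (AlgebraicClosure E⸨X⸩)).comp <|
      (algebraMap (RatFunc E) E⸨X⸩).comp <|
        (RatFunc.algEquivOfTranscendental z hzE).symm.toRingEquiv.toRingHom
  have hpoly (p : E[X]) : φ (aeval z p) = algebraMap E⸨X⸩ _ ((p : PowerSeries E) : E⸨X⸩) := by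
    have h := RingHom.congr_fun hφ (aeval (AdjoinSimple.gen E z) p)
    simpa [RatFunc.coe_coe, ← aeval_algebraMap_apply] using h
  refine ⟨E, φ, fun a => ?_, ?_⟩
  · simpa using hpoly (Polynomial.C a)
  · simpa using hpoly Polynomial.X

end Place

section Rosenlicht

variable {C K : Type*} [Field C] [Field K] [Algebra C K]

variable (C) in
/-- The logarithmic differential `dy / y` in the Kähler differentials of `K` over `C`; it is zero
for `y = 0`. -/
noncomputable def dlog (y : K) : Ω[K⁄C] := y⁻¹ • KaehlerDifferential.D C K y

variable {ι : Type*} [Fintype ι]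

lemma sum_mul_logDeriv_of_sum_smul_dlog {Ω : Type*} [Field Ω] [Differential Ω] (φ : K →+* Ω)
    (hφ : ∀ a : C, (φ (algebraMap C K a))′ = 0) {c : ι → C} {y : ι → K} {v : K}
    (h : ∑ i, c i • dlog C (y i) = KaehlerDifferential.D C K v) :
    ∑ i, φ (algebraMap C K (c i)) * Differential.logDeriv (φ (y i)) = (φ v)′ := by
  let := φ.toAlgebra
  let := (φ.comp (algebraMap C K)).toAlgebra
  have : IsScalarTower C K Ω := .of_algebraMap_eq fun _ => rfl
  let D : Derivation C K Ω :=
    derivationOfAlgebraMapEqZero (Differential.deriv.compAlgebraMap (R := ℤ) (A := K)) hφ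
  have hD (a : K) : D a = (φ a)′ := rfl
  have hD_dlog (y : K) :
      D.liftKaehlerDifferential (dlog C y) = Differential.logDeriv (φ y) := by
    rw [dlog, map_smul, Derivation.liftKaehlerDifferential_comp_D, hD, Algebra.smul_def,
      RingHom.algebraMap_toAlgebra, map_inv₀, Differential.logDeriv, inv_mul_eq_div]
  have hlift := congrArg D.liftKaehlerDifferential h
  rw [Derivation.liftKaehlerDifferential_comp_D, hD, map_sum] at hlift
  rw [← hlift]
  refine Finset.sum_congr rfl fun i _ => ?_
  rw [← algebraMap_smul K (c i), map_smul, hD_dlog, Algebra.smul_def]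
  rfl

theorem isAlgebraic_prod_zpow_of_sum_smul_dlog_eq [CharZero C] {c : ι → C} {m : ι → ℤ}
    (hm : ∀ k : ι → ℤ, ∑ i, k i • c i = 0 → ∑ i, m i * k i = 0)
    {y : ι → K} (hy : ∀ i, y i ≠ 0) {v : K}
    (h : ∑ i, c i • dlog C (y i) = KaehlerDifferential.D C K v) :
    IsAlgebraic C (∏ i, y i ^ m i) := by
  by_contra hz
  obtain ⟨E, φ, hφE, hφz⟩ := exists_ringHom_laurentSeries hz
  have : CharZero E := charZero_of_injective_algebraMap (algebraMap C E).injective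
  obtain ⟨_, _⟩ := exists_differentialAlgebra_of_isAlgebraic (F := E⸨X⸩) (AlgebraicClosure E⸨X⸩)
  have hφC (a : C) :
      φ (algebraMap C K a) = algebraMap E⸨X⸩ _ (HahnSeries.C (algebraMap C E a)) :=
    hφE (algebraMap C E a)
  refine prod_zpow_ne_X (c := fun i => algebraMap C E (c i)) (y := fun i => φ (y i)) (v := φ v)
    (m := m) (fun k hk => hm k ?_) (fun i => (map_ne_zero φ).2 (hy i)) ?_ ?_
  · apply (algebraMap C E).injective
    simpa using hk
  · simp only [← hφC]
    refine sum_mul_logDeriv_of_sum_smul_dlog φ (fun a => ?_) h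
    rw [hφC, deriv_algebraMap, HahnSeries.C_apply, deriv_single]
    simp
  · simpa using hφz

end Rosenlicht

section LinearAlgebra

variable {ι : Type*}

lemma exists_int_orthogonal [Fintype ι] {V : Type*} [AddCommGroup V] [Module ℚ V]
    {c : ι → V} (hc : c ≠ 0) :
    ∃ m : ι → ℤ, m ≠ 0 ∧ ∀ k : ι → ℤ, ∑ i, k i • c i = 0 → ∑ i, m i * k i = 0 := by
  obtain ⟨j, hj⟩ := Function.ne_iff.1 hc
  obtain ⟨φ, hφ⟩ : ∃ φ : Module.Dual ℚ V, φ (c j) ≠ 0 := by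
    simpa using mt (Module.forall_dual_apply_eq_zero_iff ℚ (c j)).1 hj
  obtain ⟨b, hb⟩ := IsLocalization.exist_integer_multiples_of_finite (nonZeroDivisors ℤ)
    fun i => φ (c i)
  choose m hm using hb
  simp only [eq_intCast, zsmul_eq_mul] at hm
  have hb0 : ((b : ℤ) : ℚ) ≠ 0 := Int.cast_ne_zero.2 (nonZeroDivisors.coe_ne_zero b)
  refine ⟨m, fun h0 => hφ ?_, fun k hk => ?_⟩
  · simpa [h0, hb0] using hm j
  · have hφk : ∑ i, k i * φ (c i) = 0 := by simpa using congrArg φ hk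
    have hmk : ∑ i, (m i : ℚ) * k i = b * ∑ i, k i * φ (c i) := by
      rw [Finset.mul_sum]
      exact Finset.sum_congr rfl fun i _ => by rw [hm]; ring
    rw [hφk, mul_zero] at hmk
    exact_mod_cast hmk

lemma exists_ne_zero_mem_deriv_eq_zero {K : Type*} [Finite ι] [Field K] [Differential K]
    {S : Submodule K (ι → K)} (hS : ∀ a ∈ S, (fun i => (a i)′) ∈ S) (hne : S ≠ ⊥) :
    ∃ c ∈ S, c ≠ 0 ∧ ∀ i, (c i)′ = 0 := by
  obtain ⟨a, ⟨haS, ha0⟩, hmin⟩ := exists_minimalFor_of_wellFoundedLT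
    (fun a => a ∈ S ∧ a ≠ 0) Function.support (S.exists_mem_ne_zero_of_ne_bot hne)
  obtain ⟨j, hj⟩ : ∃ j, a j ≠ 0 := Function.ne_iff.1 ha0
  let b := (a j)⁻¹ • a
  have hbS : b ∈ S := S.smul_mem _ haS
  have hbj : b j = 1 := inv_mul_cancel₀ hj
  refine ⟨b, hbS, fun h0 => by simp [h0] at hbj, fun i => ?_⟩
  by_contra hi
  have hsupp : (Function.support fun i => (b i)′) ⊆ Function.support a := fun i hbi hai =>
    hbi (by simp [b, hai])
  have hj' := hmin ⟨hS b hbS, Function.ne_iff.2 ⟨i, hi⟩⟩ hsupp hj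
  simp [hbj] at hj'

end LinearAlgebra

section AxTheorem

variable {C K : Type*} [Field C] [Field K] [Algebra C K]

lemma derivation_liftKaehlerDifferential_dlog_sub_D (D δ : Derivation C K K) {x y : K}
    (hy : y ≠ 0) (hxy : D y = y * D x) :
    D (δ.liftKaehlerDifferential (dlog C y - KaehlerDifferential.D C K x)) =
      ⁅D, δ⁆.liftKaehlerDifferential (dlog C y - KaehlerDifferential.D C K x) := by
  simp only [dlog, map_sub, map_smul, Derivation.liftKaehlerDifferential_comp_D, smul_eq_mul,
    Derivation.leibniz, Derivation.leibniz_inv, Derivation.commutator_apply, hxy]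
  field_simp
  ring

lemma exists_algebraicIndepOn_isAlgebraic {ι : Type*} [Finite ι] (s : ι → K) :
    ∃ I : Set ι, AlgebraicIndepOn C s I ∧ ∀ j, IsAlgebraic (Algebra.adjoin C (s '' I)) (s j) := by
  obtain ⟨I, hI⟩ := Set.Finite.exists_maximal (Set.toFinite {I | AlgebraicIndepOn C s I})
    ⟨∅, algebraicIndependent_empty_type_iff.2 (algebraMap C K).injective⟩
  refine ⟨I, hI.1, fun j => ?_⟩
  by_contra hj
  have hjI : j ∈ I := hI.2 (hI.1.insert hj) (Set.subset_insert _ _) (Set.mem_insert _ _)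
  exact hj (isAlgebraic_algebraMap
    (⟨_, Algebra.subset_adjoin ⟨j, hjI, rfl⟩⟩ : Algebra.adjoin C (s '' I)))

variable {ι : Type*} [Fintype ι] {x y : ι → K}

lemma sum_deriv_smul_dlog_sub_D_eq_zero (D : Derivation C K K)
    (hy : ∀ i, y i ≠ 0) (hxy : ∀ i, D (y i) = y i * D (x i)) {a : ι → K}
    (ha : ∑ i, a i • (dlog C (y i) - KaehlerDifferential.D C K (x i)) = 0) :
    ∑ i, D (a i) • (dlog C (y i) - KaehlerDifferential.D C K (x i)) = 0 := by
  rw [← Module.forall_dual_apply_eq_zero_iff K]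
  intro l
  let δ : Derivation C K K := l.compDer (KaehlerDifferential.D C K)
  have hl : l = δ.liftKaehlerDifferential :=
    Derivation.liftKaehlerDifferential_unique _ _ δ.liftKaehlerDifferential_comp.symm
  have hδ := congrArg (fun ω => D (δ.liftKaehlerDifferential ω)) ha
  have hcomm := congrArg ⁅D, δ⁆.liftKaehlerDifferential ha
  simp only [map_zero, map_sum, map_smul, smul_eq_mul, D.leibniz,
    derivation_liftKaehlerDifferential_dlog_sub_D D δ (hy _) (hxy _),
    Finset.sum_add_distrib] at hδ hcomm
  rw [hcomm, zero_add] at hδ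
  simpa only [hl, map_sum, map_smul, smul_eq_mul, mul_comm] using hδ

section CharZero

variable [CharZero C]

lemma D_mem_span_of_isAlgebraic {s : Set K} {x : K} (hx : IsAlgebraic (Algebra.adjoin C s) x) :
    KaehlerDifferential.D C K x ∈ Submodule.span K (KaehlerDifferential.D C K '' s) := by
  let N := Submodule.span K (KaehlerDifferential.D C K '' s)
  let d : Derivation C K (Ω[K⁄C] ⧸ N) := N.mkQ.compDer (KaehlerDifferential.D C K)
  have hd (a : adjoin C s) : d (algebraMap (adjoin C s) K a) = 0 := by
    obtain ⟨a, ha⟩ := a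
    change d a = 0
    induction ha using IntermediateField.adjoin_induction with
    | mem a ha => exact (Submodule.Quotient.mk_eq_zero N).2 (Submodule.subset_span ⟨a, ha, rfl⟩)
    | algebraMap a => exact d.map_algebraMap a
    | add a b _ _ ha hb => rw [map_add, ha, hb, add_zero]
    | inv a _ ha => rw [d.leibniz_inv, ha, smul_zero]
    | mul a b _ _ ha hb => rw [d.leibniz, ha, hb, smul_zero, smul_zero, add_zero]
  exact (Submodule.Quotient.mk_eq_zero N).1 <|
    derivation_eq_zero_of_isAlgebraic (derivationOfAlgebraMapEqZero d hd)
      ((IsFractionRing.isAlgebraic_iff (Algebra.adjoin C s) (adjoin C s) K).1 hx)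

lemma not_linearIndependent_dlog_sub_D {I : Set (ι ⊕ ι)} [Fintype I]
    (hI : Fintype.card I < Fintype.card ι)
    (halg : ∀ j, IsAlgebraic (Algebra.adjoin C (Sum.elim x y '' I)) (Sum.elim x y j)) :
    ¬ LinearIndependent K fun i => dlog C (y i) - KaehlerDifferential.D C K (x i) := by
  classical
  intro hli
  have hspan := linearIndependent_le_span' _ hli
    (Set.range fun j : I => KaehlerDifferential.D C K (Sum.elim x y j)) <| by
      rintro _ ⟨i, rfl⟩
      have hD (j : ι ⊕ ι) := D_mem_span_of_isAlgebraic (halg j)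
      rw [Set.image_image, Set.image_eq_range] at hD
      exact sub_mem (Submodule.smul_mem _ _ (hD (.inr i))) (hD (.inl i))
  have hrange := Fintype.card_range_le fun j : I => KaehlerDifferential.D C K (Sum.elim x y j)
  exact (hI.trans_le (by simpa using hspan)).not_ge hrange

end CharZero

variable [Differential K]

lemma exists_sum_smul_dlog_eq_D (hC : ∀ a : K, a′ = 0 ↔ a ∈ (algebraMap C K).range)
    (hy : ∀ i, y i ≠ 0) (hxy : ∀ i, (y i)′ = y i * (x i)′)
    (hdep : ¬ LinearIndependent K fun i => dlog C (y i) - KaehlerDifferential.D C K (x i)) :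
    ∃ c : ι → C, c ≠ 0 ∧
      ∑ i, c i • dlog C (y i) = KaehlerDifferential.D C K (∑ i, c i • x i) := by
  let D : Derivation C K K :=
    derivationOfAlgebraMapEqZero Differential.deriv fun a => (hC _).2 ⟨a, rfl⟩
  let relations := LinearMap.ker <|
    Fintype.linearCombination K fun i => dlog C (y i) - KaehlerDifferential.D C K (x i)
  have mem_relations (a : ι → K) : a ∈ relations ↔
      ∑ i, a i • (dlog C (y i) - KaehlerDifferential.D C K (x i)) = 0 := Iff.rfl
  obtain ⟨a, ha, ha0, haC⟩ := exists_ne_zero_mem_deriv_eq_zero (S := relations)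
    (fun a => sum_deriv_smul_dlog_sub_D_eq_zero D hy hxy)
    (mt (fun h => linearIndependent_iff_injective_fintypeLinearCombination.2
      (LinearMap.ker_eq_bot.1 h)) hdep)
  choose c hc using fun i => (hC _).1 (haC i)
  refine ⟨c, fun h0 => ha0 (funext fun i => by simp [← hc i, h0]), ?_⟩
  simpa only [mem_relations, ← hc, algebraMap_smul, smul_sub, Finset.sum_sub_distrib, sub_eq_zero,
    map_sum, Derivation.map_smul] using ha

theorem exists_algebraicIndependent_of_deriv_eq_mul [CharZero C]
    (hC : ∀ a : K, a′ = 0 ↔ a ∈ (algebraMap C K).range)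
    (hy : ∀ i, y i ≠ 0) (hxy : ∀ i, (y i)′ = y i * (x i)′)
    (hlin : ∀ m : ι → ℤ, m ≠ 0 → ∑ i, m i * (x i)′ ≠ 0) :
    ∃ g : ι → ι ⊕ ι, Function.Injective g ∧
      AlgebraicIndependent C fun i => Sum.elim x y (g i) := by
  obtain ⟨I, hI, halg⟩ := exists_algebraicIndepOn_isAlgebraic (C := C) (Sum.elim x y)
  have := Fintype.ofFinite I
  rcases le_or_gt (Fintype.card ι) (Fintype.card I) with hcard | hcard
  · obtain ⟨e⟩ := Function.Embedding.nonempty_of_card_le hcard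
    exact ⟨fun i => e i, Subtype.val_injective.comp e.injective, hI.comp e e.injective⟩
  exfalso
  obtain ⟨c, hc0, hc⟩ :=
    exists_sum_smul_dlog_eq_D hC hy hxy (not_linearIndependent_dlog_sub_D hcard halg)
  obtain ⟨m, hm0, hm⟩ := exists_int_orthogonal hc0
  let D : Derivation C K K :=
    derivationOfAlgebraMapEqZero Differential.deriv fun a => (hC _).2 ⟨a, rfl⟩
  have hprod : (∏ i, y i ^ m i)′ = 0 :=
    derivation_eq_zero_of_isAlgebraic D (isAlgebraic_prod_zpow_of_sum_smul_dlog_eq hm hy hc)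
  apply hlin m hm0
  calc ∑ i, m i * (x i)′ = ∑ i, m i * Differential.logDeriv (y i) := by
        simp only [Differential.logDeriv, hxy, mul_div_cancel_left₀ _ (hy _)]
    _ = Differential.logDeriv (∏ i, y i ^ m i) := (logDeriv_prod_zpow hy m).symm
    _ = 0 := by rw [Differential.logDeriv, hprod, zero_div]

end AxTheorem

section Taylor

open scoped Nat

variable {𝕜 : Type*} [NontriviallyNormedField 𝕜] {p : 𝕜} {f g : 𝕜 → 𝕜}

/-- The formal Taylor series of `f` at `p`, in the variable `z - p`. It is meaningful for `f`
analytic at `p`; elsewhere the coefficients are junk values of `iteratedDeriv`. -/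
noncomputable def taylorSeries (p : 𝕜) (f : 𝕜 → 𝕜) : PowerSeries 𝕜 :=
  PowerSeries.mk fun k => iteratedDeriv k f p / k !

lemma coeff_taylorSeries (p : 𝕜) (f : 𝕜 → 𝕜) (k : ℕ) :
    PowerSeries.coeff k (taylorSeries p f) = iteratedDeriv k f p / k ! :=
  PowerSeries.coeff_mk _ _

lemma taylorSeries_congr (h : f =ᶠ[nhds p] g) : taylorSeries p f = taylorSeries p g := by
  ext k
  rw [coeff_taylorSeries, coeff_taylorSeries, h.iteratedDeriv_eq]

lemma taylorSeries_const (p c : 𝕜) : taylorSeries p (fun _ => c) = PowerSeries.C c := by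
  ext k
  rw [coeff_taylorSeries, iteratedDeriv_const, PowerSeries.coeff_C]
  split_ifs with h <;> simp [h]

lemma taylorSeries_add [CompleteSpace 𝕜] (hf : AnalyticAt 𝕜 f p) (hg : AnalyticAt 𝕜 g p) :
    taylorSeries p (f + g) = taylorSeries p f + taylorSeries p g := by
  ext k
  simp only [map_add, coeff_taylorSeries, iteratedDeriv_add hf.contDiffAt hg.contDiffAt, add_div]

/-- The algebra of functions that are analytic at `p`, the common source of Taylor expansion and of
restriction to a set. Its elements are total functions, not germs. -/
def analyticSubalgebra (p : 𝕜) : Subalgebra 𝕜 (𝕜 → 𝕜) where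
  carrier := {f | AnalyticAt 𝕜 f p}
  mul_mem' hf hg := hf.mul hg
  add_mem' hf hg := hf.add hg
  algebraMap_mem' c := analyticAt_const (v := c)

/-- Restriction to `U` of the functions analytic at `p`, as an algebra homomorphism. -/
def restrictHom (p : 𝕜) (U : Set 𝕜) : analyticSubalgebra p →ₐ[𝕜] (U → 𝕜) :=
  AlgHom.pi fun z : U => (Pi.evalAlgHom 𝕜 (fun _ : 𝕜 => 𝕜) z).comp (analyticSubalgebra p).val

variable [CharZero 𝕜]

lemma taylorSeries_deriv (p : 𝕜) (f : 𝕜 → 𝕜) :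
    taylorSeries p (deriv f) = PowerSeries.derivative 𝕜 (taylorSeries p f) := by
  ext k
  have hk : (k ! : 𝕜) ≠ 0 := mod_cast k.factorial_ne_zero
  have hk1 : (k + 1 : 𝕜) ≠ 0 := mod_cast k.succ_ne_zero
  rw [PowerSeries.coeff_derivative, coeff_taylorSeries, coeff_taylorSeries, ← iteratedDeriv_succ',
    Nat.factorial_succ]
  push_cast
  field_simp

variable [CompleteSpace 𝕜]

lemma taylorSeries_mul (hf : AnalyticAt 𝕜 f p) (hg : AnalyticAt 𝕜 g p) :
    taylorSeries p (f * g) = taylorSeries p f * taylorSeries p g := by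
  ext k
  rw [PowerSeries.coeff_mul, coeff_taylorSeries, iteratedDeriv_mul hf.contDiffAt hg.contDiffAt,
    Finset.Nat.sum_antidiagonal_eq_sum_range_succ_mk, Finset.sum_div]
  refine Finset.sum_congr rfl fun i hi => ?_
  have hk : (k ! : 𝕜) ≠ 0 := mod_cast k.factorial_ne_zero
  rw [coeff_taylorSeries, coeff_taylorSeries, Nat.cast_choose 𝕜 (Finset.mem_range_succ_iff.1 hi)]
  field_simp

lemma eventuallyEq_zero_of_taylorSeries_eq_zero (hf : AnalyticAt 𝕜 f p)
    (h : taylorSeries p f = 0) : f =ᶠ[nhds p] 0 := by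
  have hcoeff : (fun k => iteratedDeriv k f p / k ! : ℕ → 𝕜) = 0 := by
    ext k
    rw [← coeff_taylorSeries, h, map_zero, Pi.zero_apply]
  have hseries := hf.hasFPowerSeriesAt
  rw [hcoeff, FormalMultilinearSeries.ofScalars_series_eq_zero_of_scalar_zero] at hseries
  exact hseries.eventually_eq_zero

/-- Taylor expansion at `p`, with values in the differential field of Laurent series. -/
noncomputable def taylorHom (p : 𝕜) : analyticSubalgebra p →ₐ[𝕜] 𝕜⸨X⸩ where
  toRingHom := RingHom.mk'
    { toFun f := (taylorSeries p f : PowerSeries 𝕜)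
      map_one' := by
        rw [← PowerSeries.coe_one, ← map_one PowerSeries.C, ← taylorSeries_const p 1]
        rfl
      map_mul' f g := by
        rw [← PowerSeries.coe_mul, ← taylorSeries_mul f.2 g.2]
        rfl }
    fun f g => by
      rw [MonoidHom.coe_mk, OneHom.coe_mk, ← PowerSeries.coe_add, ← taylorSeries_add f.2 g.2]
      rfl
  commutes' c := by
    rw [LaurentSeries.algebraMap_apply, ← HahnSeries.ofPowerSeries_C, ← taylorSeries_const p c]
    rfl

lemma taylorHom_apply (f : analyticSubalgebra p) :
    taylorHom p f = (taylorSeries p f : PowerSeries 𝕜) := rfl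

lemma taylorHom_eq_zero_iff {f : analyticSubalgebra p} :
    taylorHom p f = 0 ↔ (f : 𝕜 → 𝕜) =ᶠ[nhds p] 0 := by
  rw [taylorHom_apply]
  refine ⟨fun h => eventuallyEq_zero_of_taylorSeries_eq_zero f.2 ?_, fun h => ?_⟩
  · exact HahnSeries.ofPowerSeries_injective (h.trans PowerSeries.coe_zero.symm)
  · rw [taylorSeries_congr h]
    exact map_zero (taylorHom p)

end Taylor

section AlgebraicIndependence

variable {ι R A B K : Type*} [CommRing R] [CommRing A] [CommRing B] [CommRing K] [Algebra R A]
  [Algebra R B] [Algebra R K]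

lemma algebraicIndependent_comp_of_ker_le {ρ : A →ₐ[R] B} {τ : A →ₐ[R] K} {s : ι → A}
    (h : RingHom.ker ρ ≤ RingHom.ker τ) (hs : AlgebraicIndependent R (τ ∘ s)) :
    AlgebraicIndependent R (ρ ∘ s) := by
  rw [algebraicIndependent_iff] at hs ⊢
  intro P hP
  have hρ : ρ (MvPolynomial.aeval s P) = 0 := by rwa [MvPolynomial.comp_aeval_apply]
  have hτ : τ (MvPolynomial.aeval s P) = 0 := h hρ
  exact hs P (by rwa [MvPolynomial.comp_aeval_apply] at hτ)

end AlgebraicIndependence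

section ComplexFunctions

variable {p : ℂ} {U : Set ℂ}

lemma deriv_taylorHom_cexp {f : ℂ → ℂ} (hf : AnalyticAt ℂ f p) :
    (taylorHom p ⟨fun z => Complex.exp (f z), hf.cexp'⟩)′ =
      taylorHom p ⟨fun z => Complex.exp (f z), hf.cexp'⟩ * (taylorHom p ⟨f, hf⟩)′ := by
  have hexp : deriv (fun z => Complex.exp (f z)) =ᶠ[nhds p]
      (fun z => Complex.exp (f z)) * deriv f := by
    filter_upwards [hf.eventually_analyticAt] with z hz
    exact hz.differentiableAt.hasDerivAt.cexp.deriv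
  rw [taylorHom_apply, taylorHom_apply, deriv_coe, deriv_coe, ← taylorSeries_deriv,
    taylorSeries_congr hexp, taylorSeries_mul hf.cexp' hf.deriv, taylorSeries_deriv,
    ← PowerSeries.coe_mul, mul_left_comm]

lemma taylorHom_cexp_ne_zero {f : ℂ → ℂ} (hf : AnalyticAt ℂ f p) :
    taylorHom p ⟨fun z => Complex.exp (f z), hf.cexp'⟩ ≠ 0 := fun h =>
  Complex.exp_ne_zero (f p) (taylorHom_eq_zero_iff.1 h).self_of_nhds

lemma ker_restrictHom_le_ker_taylorHom (hU : U ∈ nhds p) :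
    RingHom.ker (restrictHom p U) ≤ RingHom.ker (taylorHom p) := fun f hf =>
  taylorHom_eq_zero_iff.2 <| by
    filter_upwards [hU] with z hz
    exact congrFun hf ⟨z, hz⟩

lemma exists_eq_const_of_deriv_taylorHom_eq_zero (hU : IsPreconnected U) (hp : p ∈ U)
    {f : analyticSubalgebra p} (hf : AnalyticOnNhd ℂ (f : ℂ → ℂ) U) (h : (taylorHom p f)′ = 0) :
    ∃ c : ℂ, ∀ z ∈ U, (f : ℂ → ℂ) z = c := by
  set c := (taylorHom p f).coeff 0
  have hfc : taylorHom p (f - algebraMap ℂ _ c) = 0 := by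
    rw [map_sub, AlgHom.commutes, LaurentSeries.algebraMap_apply, ← eq_C_of_deriv_eq_zero h,
      sub_self]
  refine ⟨c, hf.eqOn_of_preconnected_of_eventuallyEq analyticOnNhd_const hU hp ?_⟩
  filter_upwards [taylorHom_eq_zero_iff.1 hfc] with z hz
  exact sub_eq_zero.1 hz

lemma sum_mul_deriv_taylorHom_ne_zero (hU : IsPreconnected U) (hp : p ∈ U) {ι : Type*} [Fintype ι]
    {f : ι → ℂ → ℂ} (hf : ∀ i, AnalyticOnNhd ℂ (f i) U) {m : ι → ℤ}
    (hm : ¬ ∃ c : ℂ, ∀ z ∈ U, ∑ i, (m i : ℂ) * f i z = c) :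
    ∑ i, m i * (taylorHom p ⟨f i, hf i p hp⟩)′ ≠ 0 := by
  intro h
  let F : analyticSubalgebra p := ∑ i, m i • ⟨f i, hf i p hp⟩
  have hF : (F : ℂ → ℂ) = fun z => ∑ i, (m i : ℂ) * f i z := by
    ext z
    simp [F]
  have hder : (taylorHom p F)′ = 0 := by simpa [F] using h
  have hanal : AnalyticOnNhd ℂ (F : ℂ → ℂ) U := hF ▸ fun z hz =>
    Finset.analyticAt_fun_sum _ fun i _ => analyticAt_const.mul (hf i z hz)
  apply hm
  simpa only [hF] using exists_eq_const_of_deriv_taylorHom_eq_zero hU hp hanal hder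

end ComplexFunctions

end AxSchanuel

open AxSchanuel

/-- Ax–Schanuel for the exponential function: if `f₁, ..., fₙ` are holomorphic
on a domain `U ⊆ ℂ` and no non-trivial `ℚ`-linear combination of them is
constant on `U`, then some `n` of the `2n` functions
`f₁, ..., fₙ, exp∘f₁, ..., exp∘fₙ` (as functions on `U`) are algebraically
independent over `ℂ`. -/
theorem ax_schanuel_exp (n : ℕ) (U : Set ℂ) (hU : IsOpen U) (hUc : IsConnected U)
    (f : Fin n → ℂ → ℂ) (hf : ∀ i, DifferentiableOn ℂ (f i) U)
    (hnc : ∀ q : Fin n → ℚ, q ≠ 0 → ¬ ∃ c : ℂ, ∀ z ∈ U, ∑ i, (q i : ℂ) * f i z = c) :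
    ∃ g : Fin n → (Fin n) ⊕ (Fin n), Function.Injective g ∧
      AlgebraicIndependent ℂ (fun i : Fin n =>
        Sum.elim (fun j => fun z : U => f j z) (fun j => fun z : U => Complex.exp (f j z))
          (g i)) := by
  obtain ⟨p, hp⟩ := hUc.nonempty
  have hfU (i) : AnalyticOnNhd ℂ (f i) U := (hf i).analyticOnNhd hU
  let F (i) : analyticSubalgebra p := ⟨f i, hfU i p hp⟩
  let E (i) : analyticSubalgebra p := ⟨fun z => Complex.exp (f i z), (hfU i p hp).cexp'⟩
  have hint (m : Fin n → ℤ) (hm : m ≠ 0) : ¬ ∃ c : ℂ, ∀ z ∈ U, ∑ i, (m i : ℂ) * f i z = c := by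
    simpa using hnc (fun i => m i) fun h => hm (funext fun i => by simpa using congrFun h i)
  obtain ⟨g, hg, hind⟩ := exists_algebraicIndependent_of_deriv_eq_mul (C := ℂ)
    (x := taylorHom p ∘ F) (y := taylorHom p ∘ E) (fun _ => deriv_eq_zero_iff_mem_range_algebraMap)
    (fun i => taylorHom_cexp_ne_zero (hfU i p hp)) (fun i => deriv_taylorHom_cexp (hfU i p hp))
    fun m hm => sum_mul_deriv_taylorHom_ne_zero hUc.isPreconnected hp hfU (hint m hm)
  rw [← Sum.comp_elim] at hind
  have hindU := algebraicIndependent_comp_of_ker_le (s := Sum.elim F E ∘ g)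
    (ker_restrictHom_le_ker_taylorHom (hU.mem_nhds hp)) hind
  rw [← Function.comp_assoc, Sum.comp_elim] at hindU
  exact ⟨g, hg, hindU⟩
end

section
/- Let U be a nonempty open connected subset of ℂ^n and let F : U → ℂ^n be a complex analytic map. Assume that for every w ∈ ℂ^n the fibre F^{-1}(w) = {z ∈ U : F(z) = w} is finite (possibly empty). Then F is an open map: the image under F of every open subset of U is open in ℂ^n. -/
/-!
Suppose that `z₀` is isolated in its fibre and that some `w` close to `f z₀` is omitted by `f` on
a small closed ball `K` around `z₀`. Let `u` be the Jacobian determinant of `f`. Where `u ≠ 0`, `f`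
is locally biholomorphic, so the maximum principle along the lines through `w` in the target shows
that `‖u‖ * exp (c / ‖f - w‖)` has no local maximum for `c > 0`. Its maximum over `K` is thus
attained on the boundary, where `‖f - w‖` is bounded below, and letting `c → ∞` gives `u = 0` near
`z₀`. But at a point of a nonempty open set where the rank of the derivative is maximal, hence
locally constant, a degenerate derivative produces a curve in the fibre, so that fibre has a
non-isolated point.
-/

open Set Filter Topology Metric Asymptotics Module

theorem tendsto_smul_sub_of_hasStrictFDerivAt {𝕜 E F : Type*} [NontriviallyNormedField 𝕜]
    [NormedAddCommGroup E] [NormedSpace 𝕜 E] [NormedAddCommGroup F] [NormedSpace 𝕜 F]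
    {f : E → F} {f' : E →L[𝕜] F} {c : E} (hf : HasStrictFDerivAt f f' c) (e : E) :
    Tendsto (fun p : 𝕜 × E ↦ p.1⁻¹ • (f (p.2 + p.1 • e) - f p.2)) (𝓝[≠] 0 ×ˢ 𝓝 c) (𝓝 (f' e)) := by
  have hpair : Tendsto (fun p : 𝕜 × E ↦ (p.2 + p.1 • e, p.2)) (𝓝[≠] 0 ×ˢ 𝓝 c) (𝓝 (c, c)) := by
    refine Tendsto.mono_left (Continuous.tendsto' (by fun_prop) (0, c) _ (by simp)) ?_
    exact nhds_prod_eq.ge.trans' (prod_mono_left _ nhdsWithin_le_nhds)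
  have hbound : (fun p : 𝕜 × E ↦ p.2 + p.1 • e - p.2) =O[𝓝[≠] 0 ×ˢ 𝓝 c] Prod.fst :=
    .of_bound ‖e‖ (.of_forall fun p ↦ by simp [norm_smul, mul_comm])
  have hsmall := (hf.isLittleO.comp_tendsto hpair).trans_isBigO hbound
  refine tendsto_sub_nhds_zero_iff.1 (hsmall.tendsto_inv_smul_nhds_zero.congr' ?_)
  filter_upwards [prod_mem_prod self_mem_nhdsWithin univ_mem] with p ⟨(hp0 : p.1 ≠ 0), _⟩
  simp [smul_sub, hp0]

theorem tendstoLocallyUniformlyOn_smul_sub_of_contDiffOn {𝕜 E F : Type*} [RCLike 𝕜]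
    [NormedAddCommGroup E] [NormedSpace 𝕜 E] [NormedAddCommGroup F] [NormedSpace 𝕜 F]
    {f : E → F} {U : Set E} (hU : IsOpen U) (hf : ContDiffOn 𝕜 1 f U) (e : E) :
    TendstoLocallyUniformlyOn (fun (s : 𝕜) z ↦ s⁻¹ • (f (z + s • e) - f z))
      (fun z ↦ fderiv 𝕜 f z e) (𝓝[≠] 0) U := by
  refine hU.tendstoLocallyUniformlyOn_iff_forall_tendsto.2 fun c hc ↦ ?_
  have hlim : ContinuousAt (fun z ↦ fderiv 𝕜 f z e) c :=
    ((hf.continuousOn_fderiv_of_isOpen hU le_rfl).continuousAt (hU.mem_nhds hc)).clm_apply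
      continuousAt_const
  exact ((hlim.tendsto.comp tendsto_snd).prodMk_nhds (tendsto_smul_sub_of_hasStrictFDerivAt
    ((hf.contDiffAt (hU.mem_nhds hc)).hasStrictFDerivAt one_ne_zero) e)).mono_right
    (nhds_le_uniformity _)

section Holomorphic

variable {E F : Type*} [NormedAddCommGroup E] [NormedSpace ℂ E]
  [NormedAddCommGroup F] [NormedSpace ℂ F] {f : E → F} {U : Set E} {c : E} {R M : ℝ}

theorem norm_fderiv_le_of_norm_le_on_ball (hf : DifferentiableOn ℂ f (ball c R))
    (hR : 0 < R) (hM : ∀ z ∈ ball c R, ‖f z‖ ≤ M) : ‖fderiv ℂ f c‖ ≤ (M + M) / R :=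
  Complex.norm_fderiv_le_div_of_mapsTo_ball hf
    (fun z hz ↦ mem_closedBall_iff_norm.2 <|
      (norm_sub_le _ _).trans (add_le_add (hM z hz) (hM c (mem_ball_self hR)))) hR

theorem exists_dist_le_mul_dist_of_holomorphic (hU : IsOpen U) (hf : DifferentiableOn ℂ f U)
    (hc : c ∈ U) : ∃ r > 0, ∃ K, ball c r ⊆ U ∧
      ∀ y ∈ ball c r, ∀ z ∈ ball c r, dist (f z) (f y) ≤ K * dist z y := by
  obtain ⟨R, hR, hRU, hRf⟩ : ∃ R > 0, ball c R ⊆ U ∧ ball c R ⊆ f ⁻¹' ball (f c) 1 := by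
    simpa only [subset_inter_iff] using Metric.mem_nhds_iff.1 (inter_mem (hU.mem_nhds hc)
      ((hf.continuousOn.continuousAt (hU.mem_nhds hc)).preimage_mem_nhds (ball_mem_nhds _ one_pos)))
  refine ⟨R / 3, by positivity, 2 / (2 * R / 3), (ball_subset_ball (by linarith)).trans hRU,
    fun y hy z hz ↦ ?_⟩
  have hyR : ball y (2 * R / 3) ⊆ ball c R :=
    ball_subset_ball' (by linarith [mem_ball.1 hy])
  have hmaps : MapsTo f (ball y (2 * R / 3)) (closedBall (f y) 2) := fun x hx ↦
    (dist_triangle_right _ _ (f c)).trans <| by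
      linarith [mem_ball.1 (hRf (hyR hx)),
        mem_ball.1 (hRf (hyR (mem_ball_self (by positivity))))]
  exact Complex.dist_le_div_mul_dist_of_mapsTo_ball (hf.mono (hyR.trans hRU)) hmaps
    (mem_ball.2 <| (dist_triangle_right _ _ c).trans_lt
      (by linarith [mem_ball.1 hy, mem_ball.1 hz]))

theorem continuousOn_fderiv_of_holomorphic (hU : IsOpen U) (hf : DifferentiableOn ℂ f U) :
    ContinuousOn (fderiv ℂ f) U := by
  intro c hc
  obtain ⟨r, hr, K, hrU, hK⟩ := exists_dist_le_mul_dist_of_holomorphic hU hf hc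
  have hdiff {z : E} (hz : z ∈ ball c r) : DifferentiableAt ℂ f z :=
    hf.differentiableAt (hU.mem_nhds (hrU hz))
  refine (continuousAt_of_locally_lipschitz (half_pos hr) ((K + K) / (r / 2))
    fun z hz ↦ ?_).continuousWithinAt
  have hshift {y : E} (hy : y ∈ ball c (r / 2)) : y ∈ ball c r ∧ y + (z - c) ∈ ball c r := by
    rw [mem_ball_iff_norm] at hy ⊢
    rw [dist_eq_norm] at hz
    refine ⟨by linarith, mem_ball_iff_norm.2 ?_⟩
    rw [show y + (z - c) - c = (y - c) + (z - c) by abel]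
    exact (norm_add_le _ _).trans_lt (by linarith)
  have hd : ∀ y ∈ ball c (r / 2), HasFDerivAt (fun y ↦ f (y + (z - c)) - f y)
      (fderiv ℂ f (y + (z - c)) - fderiv ℂ f y) y := fun y hy ↦
    ((hasFDerivAt_comp_add_right _).2 (hdiff (hshift hy).2).hasFDerivAt).sub
      (hdiff (hshift hy).1).hasFDerivAt
  have hbound := norm_fderiv_le_of_norm_le_on_ball (M := K * dist z c)
    (fun y hy ↦ (hd y hy).differentiableAt.differentiableWithinAt) (half_pos hr) fun y hy ↦ by
      simpa [dist_eq_norm] using hK y (hshift hy).1 _ (hshift hy).2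
  rw [(hd c (mem_ball_self (half_pos hr))).fderiv, add_sub_cancel, ← dist_eq_norm] at hbound
  exact hbound.trans_eq (by ring)

theorem contDiffOn_one_of_holomorphic (hU : IsOpen U) (hf : DifferentiableOn ℂ f U) :
    ContDiffOn ℂ 1 f U := by
  rw [← zero_add 1, contDiffOn_succ_iff_fderiv_of_isOpen hU, contDiffOn_zero]
  exact ⟨hf, by simp, continuousOn_fderiv_of_holomorphic hU hf⟩

theorem uniformCauchySeqOn_fderiv_of_holomorphic {ι : Type*} {l : Filter ι} {g : ι → E → F}
    (hR : 0 < R) (hg : ∀ᶠ i in l, DifferentiableOn ℂ (g i) (ball c R))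
    (hcauchy : UniformCauchySeqOn g l (ball c R)) :
    UniformCauchySeqOn (fun i ↦ fderiv ℂ (g i)) l (ball c (R / 2)) := by
  intro u hu
  obtain ⟨ε, hε, hεu⟩ := Metric.mem_uniformity_dist.1 hu
  filter_upwards [hcauchy _ (Metric.dist_mem_uniformity (show 0 < ε * R / 8 by positivity)),
    hg.prod_mk hg] with ⟨i, j⟩ hij ⟨hi, hj⟩ z hz
  have hball : ball z (R / 2) ⊆ ball c R := ball_subset_ball' (by linarith [mem_ball.1 hz])
  have hbound : ‖fderiv ℂ (fun y ↦ g i y - g j y) z‖ ≤ _ :=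
    norm_fderiv_le_of_norm_le_on_ball ((hi.sub hj).mono hball) (half_pos hR)
      fun y hy ↦ (dist_eq_norm (g i y) (g j y) ▸ hij y (hball hy)).le
  have hzc : ball c R ∈ 𝓝 z := isOpen_ball.mem_nhds (hball (mem_ball_self (half_pos hR)))
  rw [fderiv_fun_sub (hi.differentiableAt hzc) (hj.differentiableAt hzc), ← dist_eq_norm] at hbound
  exact hεu (hbound.trans_lt (by field_simp; linarith))

theorem differentiableAt_of_tendstoUniformlyOn_of_holomorphic [CompleteSpace F] {ι : Type*}
    {l : Filter ι} [l.NeBot] {g : ι → E → F} (hR : 0 < R)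
    (hg : ∀ᶠ i in l, DifferentiableOn ℂ (g i) (ball c R))
    (hgf : TendstoUniformlyOn g f l (ball c R)) : DifferentiableAt ℂ f c := by
  have hcauchy := uniformCauchySeqOn_fderiv_of_holomorphic hR hg hgf.uniformCauchySeqOn
  choose! g' hg' using fun z (hz : z ∈ ball c (R / 2)) ↦
    cauchy_map_iff_exists_tendsto.1 (hcauchy.cauchy_map hz)
  have hball : ball c (R / 2) ∈ 𝓝 c := ball_mem_nhds c (half_pos hR)
  refine (hasFDerivAt_of_tendstoUniformlyOnFilter (f := g)
    ((hcauchy.tendstoUniformlyOn_of_tendsto hg').tendstoUniformlyOnFilter.mono_right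
      (le_principal_iff.2 hball)) ?_ ?_).differentiableAt
  · filter_upwards [hg.prod_mk (eventually_mem_nhds_iff.2 (ball_mem_nhds c hR))] with p hp
    exact (hp.1.differentiableAt hp.2).hasFDerivAt
  · filter_upwards [ball_mem_nhds c hR] with z hz using hgf.tendsto_at hz

theorem contDiffOn_one_fderiv_of_holomorphic [FiniteDimensional ℂ E] [CompleteSpace F]
    (hU : IsOpen U) (hf : DifferentiableOn ℂ f U) : ContDiffOn ℂ 1 (fderiv ℂ f) U := by
  refine contDiffOn_clm_apply.2 fun e ↦ contDiffOn_one_of_holomorphic hU fun c hc ↦ ?_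
  have : ProperSpace E := FiniteDimensional.proper ℂ E
  obtain ⟨R, hR, hRU⟩ := Metric.nhds_basis_closedBall.mem_iff.1 (hU.mem_nhds hc)
  have hunif :=
    (tendstoLocallyUniformlyOn_iff_forall_isCompact hU).1
      (tendstoLocallyUniformlyOn_smul_sub_of_contDiffOn hU (contDiffOn_one_of_holomorphic hU hf) e)
      _ hRU (isCompact_closedBall c R)
  refine DifferentiableAt.differentiableWithinAt <|
    differentiableAt_of_tendstoUniformlyOn_of_holomorphic (half_pos hR) ?_
      (hunif.mono ((ball_subset_ball (half_le_self hR.le)).trans ball_subset_closedBall))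
  have hshift : Tendsto (fun s : ℂ ↦ ‖s • e‖) (𝓝[≠] 0) (𝓝 0) :=
    tendsto_nhdsWithin_of_tendsto_nhds (Continuous.tendsto' (by fun_prop) _ _ (by simp))
  filter_upwards [hshift.eventually_lt_const (half_pos hR)] with s hs
  refine DifferentiableOn.const_smul (.sub (hf.comp (by fun_prop) fun z hz ↦ hRU ?_)
    (hf.mono fun z hz ↦ hRU ?_)) _
  · rw [mem_closedBall_iff_norm, add_sub_right_comm]
    exact (norm_add_le _ _).trans (by linarith [mem_ball_iff_norm.1 hz])
  · exact mem_closedBall.2 (by linarith [mem_ball.1 hz])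

end Holomorphic

section ConstantRank

variable {𝕜 E F G : Type*} [RCLike 𝕜] [NormedAddCommGroup E] [NormedSpace 𝕜 E]
  [NormedAddCommGroup F] [NormedSpace 𝕜 F] [NormedAddCommGroup G] [NormedSpace 𝕜 G]

theorem eventually_surjective_of_surjective [FiniteDimensional 𝕜 F] {A : E →L[𝕜] F}
    (hA : Function.Surjective A) : ∀ᶠ B : E →L[𝕜] F in 𝓝 A, Function.Surjective B := by
  have : CompleteSpace F := FiniteDimensional.complete 𝕜 F
  obtain ⟨s, hs⟩ := A.toLinearMap.exists_rightInverse_of_surjective (LinearMap.range_eq_top.2 hA)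
  have hAs : A ∘L s.toContinuousLinearMap = 1 := by
    ext x
    exact DFunLike.congr_fun hs x
  have hcont : Tendsto (fun B : E →L[𝕜] F ↦ B ∘L s.toContinuousLinearMap) (𝓝 A) (𝓝 1) :=
    Continuous.tendsto' (by fun_prop) _ _ hAs
  filter_upwards [hcont (Units.isOpen.mem_nhds isUnit_one)] with B ⟨u, hu⟩
  refine Function.Surjective.of_comp (g := s) fun x ↦ ⟨(u⁻¹ : (F →L[𝕜] F)ˣ).val x, ?_⟩
  have := DFunLike.congr_fun u.mul_inv x
  rwa [hu] at this

theorem eventually_ker_comp_le_ker [FiniteDimensional 𝕜 E] [FiniteDimensional 𝕜 F] {A : E →L[𝕜] G}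
    {p : G →L[𝕜] F} (hpA : Function.Surjective (p ∘L A)) (hker : (p ∘L A).ker = A.ker) :
    ∀ᶠ B : E →L[𝕜] G in 𝓝 A, finrank 𝕜 A.ker ≤ finrank 𝕜 B.ker → (p ∘L B).ker ≤ B.ker := by
  have hcont : Tendsto (fun B : E →L[𝕜] G ↦ p ∘L B) (𝓝 A) (𝓝 (p ∘L A)) :=
    Continuous.tendsto (by fun_prop) _
  filter_upwards [hcont.eventually (eventually_surjective_of_surjective hpA)] with B hpB hdim
  have hA := (p ∘L A).toLinearMap.finrank_range_add_finrank_ker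
  have hB := (p ∘L B).toLinearMap.finrank_range_add_finrank_ker
  rw [LinearMap.range_eq_top.2 hpA, hker] at hA
  rw [LinearMap.range_eq_top.2 hpB] at hB
  refine (Submodule.eq_of_le_of_finrank_le
    (LinearMap.ker_le_ker_comp B.toLinearMap p.toLinearMap) ?_).ge
  change finrank 𝕜 (p ∘L B).ker ≤ _
  omega

theorem exists_contDiffAt_parametrization_of_surjective [CompleteSpace E]
    [FiniteDimensional 𝕜 F] {h : E → F} {z : E} (hh : ContDiffAt 𝕜 1 h z)
    (hsurj : (fderiv 𝕜 h z).range = ⊤) :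
    ∃ φ : (fderiv 𝕜 h z).ker → E, φ 0 = z ∧ ContDiffAt 𝕜 1 φ 0 ∧
      Tendsto φ (𝓝[≠] 0) (𝓝[≠] z) ∧ ∀ᶠ t in 𝓝 0, h (φ t) = h z := by
  have hstrict := hh.hasStrictFDerivAt one_ne_zero
  have : CompleteSpace F := FiniteDimensional.complete 𝕜 F
  refine ⟨hstrict.implicitFunction _ _ hsurj (h z), hstrict.implicitFunction_apply_image hsurj,
    ?_, ?_, ?_⟩
  · let D := hstrict.implicitFunctionDataOfComplemented _ _ hsurj
      (fderiv 𝕜 h z).ker_closedComplemented_of_finiteDimensional_range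
    have hright : ContDiffAt 𝕜 1 D.rightFun z :=
      D.rightDeriv.contDiff.contDiffAt.comp z (contDiffAt_id.sub contDiffAt_const)
    have hD : ContDiffAt 𝕜 1 D.implicitFunction.uncurry (D.prodFun z) :=
      D.contDiffAt_implicitFunction hh hright one_ne_zero
    have hpt : D.prodFun z = (h z, 0) := hstrict.implicitToOpenPartialHomeomorph_self hsurj
    rw [hpt] at hD
    exact hD.comp 0 (contDiffAt_const.prodMk contDiffAt_id)
  · have := (hstrict.to_implicitFunction hsurj).hasFDerivAt.tendsto_nhdsNE
      ⟨1, fun x y ↦ by simp [Subtype.edist_eq]⟩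
    rwa [hstrict.implicitFunction_apply_image hsurj] at this
  · exact (hstrict.map_implicitFunction_eq hsurj).curry_nhds.self_of_nhds

theorem eventually_eq_of_eventually_fderiv_eq_zero {f : E → F} {z : E}
    (hf : ∀ᶠ y in 𝓝 z, HasFDerivAt f (0 : E →L[𝕜] F) y) :
    ∀ᶠ y in 𝓝 z, f y = f z := by
  obtain ⟨r, hr, hball⟩ := Metric.eventually_nhds_iff_ball.1 hf
  filter_upwards [ball_mem_nhds z hr] with y hy
  let : NormedSpace ℝ E := .restrictScalars ℝ 𝕜 E
  exact isOpen_ball.is_const_of_fderiv_eq_zero (𝕜 := 𝕜) (convex_ball z r).isPreconnected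
    (fun x hx ↦ (hball x hx).differentiableAt.differentiableWithinAt)
    (fun x hx ↦ (hball x hx).fderiv) hy (mem_ball_self hr)

theorem hasFDerivAt_comp_zero_of_ker_comp_le {H : Type*} [NormedAddCommGroup H] [NormedSpace 𝕜 H]
    {f : E → G} {f' : E →L[𝕜] G} {p : G →L[𝕜] F} {φ : H → E} {t : H} {c : F}
    (hf : HasFDerivAt f f' (φ t)) (hφ : DifferentiableAt 𝕜 φ t) (hker : (p ∘L f').ker ≤ f'.ker)
    (hconst : ∀ᶠ x in 𝓝 t, p (f (φ x)) = c) : HasFDerivAt (f ∘ φ) (0 : H →L[𝕜] G) t := by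
  have hzero : (p ∘L f') ∘L fderiv 𝕜 φ t = 0 :=
    ((p.hasFDerivAt.comp _ hf).comp t hφ.hasFDerivAt).unique
      ((hasFDerivAt_const c t).congr_of_eventuallyEq hconst)
  exact (hf.comp t hφ.hasFDerivAt).congr_fderiv <|
    ContinuousLinearMap.ext fun v ↦ hker (DFunLike.congr_fun hzero v)

theorem frequently_eq_of_eventually_finrank_ker_le [FiniteDimensional 𝕜 E] {f : E → G} {z : E}
    (hf : ContDiffAt 𝕜 1 f z) (hker : (fderiv 𝕜 f z).ker ≠ ⊥)
    (hrank : ∀ᶠ y in 𝓝 z, finrank 𝕜 (fderiv 𝕜 f z).ker ≤ finrank 𝕜 (fderiv 𝕜 f y).ker) :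
    ∃ᶠ y in 𝓝[≠] z, f y = f z := by
  have : CompleteSpace E := FiniteDimensional.complete 𝕜 E
  set L := fderiv 𝕜 f z
  obtain ⟨p, hp⟩ := Submodule.ClosedComplemented.of_finiteDimensional L.range
  have hpL : p ∘L L = L.toLinearMap.rangeRestrict.toContinuousLinearMap := by
    ext x
    simp [hp ⟨L x, x, rfl⟩]
  have hsurj : Function.Surjective (p ∘L L) := hpL ▸ L.toLinearMap.surjective_rangeRestrict
  have hkerp : (p ∘L L).ker = L.ker := hpL ▸ L.toLinearMap.ker_rangeRestrict
  have hDh : fderiv 𝕜 (p ∘ f) z = p ∘L L :=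
    (p.hasFDerivAt.comp z (hf.differentiableAt one_ne_zero).hasFDerivAt).fderiv
  obtain ⟨φ, hφz, hφ, hφne, hconst⟩ := exists_contDiffAt_parametrization_of_surjective
    (p.contDiff.contDiffAt.comp z hf) (hDh ▸ LinearMap.range_eq_top.2 hsurj)
  -- `φ` parametrizes a fibre of `p ∘ f`; by constancy of the rank, `f` is constant there too.
  have hcrit : ∀ᶠ t in 𝓝 0, HasFDerivAt (f ∘ φ) (0 : _ →L[𝕜] G) t := by
    have hφt : Tendsto φ (𝓝 0) (𝓝 z) := by
      simpa only [ContinuousAt, hφz] using hφ.continuousAt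
    have hle := ((hf.fderiv_right (m := 0) le_rfl).continuousAt.eventually
      (eventually_ker_comp_le_ker hsurj hkerp)).and hrank
    filter_upwards [hφt.eventually ((hf.eventually (by simp)).and hle), hφ.eventually (by simp),
      hconst.eventually_nhds] with t ⟨hft, hkert, hrankt⟩ hφt hconstt
    exact hasFDerivAt_comp_zero_of_ker_comp_le (hft.differentiableAt one_ne_zero).hasFDerivAt
      (hφt.differentiableAt one_ne_zero) (hkert hrankt) hconstt
  have : Nontrivial (fderiv 𝕜 (p ∘ f) z).ker := by
    rwa [hDh, hkerp, Submodule.nontrivial_iff_ne_bot]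
  have := Module.punctured_nhds_neBot 𝕜 (fderiv 𝕜 (p ∘ f) z).ker 0
  refine hφne.frequently (Eventually.frequently ?_)
  filter_upwards [nhdsWithin_le_nhds (eventually_eq_of_eventually_fderiv_eq_zero hcrit)] with t ht
  exact ht.trans (congrArg f hφz)

theorem exists_frequently_eq_of_ker_fderiv_ne_bot [FiniteDimensional 𝕜 E] {f : E → G} {V : Set E}
    (hV : IsOpen V) (hVne : V.Nonempty) (hf : ContDiffOn 𝕜 1 f V)
    (hker : ∀ z ∈ V, (fderiv 𝕜 f z).ker ≠ ⊥) : ∃ z ∈ V, ∃ᶠ y in 𝓝[≠] z, f y = f z := by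
  obtain ⟨z, hz, hmin⟩ := WellFounded.has_min
    (measure fun z ↦ finrank 𝕜 (fderiv 𝕜 f z).ker).wf V hVne
  exact ⟨z, hz, frequently_eq_of_eventually_finrank_ker_le (hf.contDiffAt (hV.mem_nhds hz))
    (hker z hz) (eventually_of_mem (hV.mem_nhds hz) fun y hy ↦ not_lt.1 (hmin y hy))⟩

end ConstantRank

section MaximumPrinciple

theorem frequently_re_lt_norm_nhds_one : ∃ᶠ s : ℂ in 𝓝 1, s.re < ‖s‖ := by
  have hlim : Tendsto (fun t : ℝ ↦ (1 : ℂ) + t * Complex.I) (𝓝[≠] 0) (𝓝 1) :=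
    tendsto_nhdsWithin_of_tendsto_nhds (Continuous.tendsto' (by fun_prop) _ _ (by simp))
  refine hlim.frequently (Eventually.frequently ?_)
  filter_upwards [self_mem_nhdsWithin] with t ht
  refine lt_of_le_of_ne (Complex.re_le_norm _) fun h ↦ ht ?_
  have := Complex.abs_re_eq_norm.1 (h ▸ by simp : |(1 + t * Complex.I : ℂ).re| = _)
  simpa using this

variable {E F G : Type*} [NormedAddCommGroup E] [NormedSpace ℂ E]
  [NormedAddCommGroup F] [NormedSpace ℂ F] [NormedAddCommGroup G] [NormedSpace ℂ G]
  {f : E → G} {u : E → F} {U : Set E} {z : E} {w : G} {c : ℝ}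

theorem exists_holomorphic_section_of_isInvertible [CompleteSpace E] (hf : ContDiffAt ℂ 1 f z)
    (hinv : (fderiv ℂ f z).IsInvertible) :
    ∃ g : G → E, g (f z) = z ∧ ContDiffAt ℂ 1 g (f z) ∧ ∀ᶠ y in 𝓝 (f z), f (g y) = y := by
  obtain ⟨f', hf'⟩ := hinv
  have hder : HasFDerivAt f (f' : E →L[ℂ] G) z :=
    hf' ▸ (hf.differentiableAt one_ne_zero).hasFDerivAt
  exact ⟨hf.localInverse hder one_ne_zero, hf.localInverse_apply_image hder one_ne_zero,
    hf.to_localInverse hder one_ne_zero,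
    (hf.hasStrictFDerivAt' hder one_ne_zero).eventually_right_inverse⟩

theorem not_isLocalMax_norm_mul_exp_mul_norm {v : ℂ → F} {a : ℝ}
    (hv : ∀ᶠ s in 𝓝 1, DifferentiableAt ℂ v s) (hv1 : v 1 ≠ 0) (ha : 0 < a) :
    ¬ IsLocalMax (fun s ↦ ‖v s‖ * Real.exp (a * ‖s‖)) 1 := by
  intro hmax
  -- `‖h s‖` is at most the given weight, with equality at `s = 1`, so `h` has a local maximum too.
  let h : ℂ → F := fun s ↦ Complex.exp (a * s) • v s
  have hh : ∀ᶠ s in 𝓝 1, DifferentiableAt ℂ h s :=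
    hv.mono fun s hs ↦ .smul (by fun_prop) hs
  have hnorm : ∀ s, ‖h s‖ = ‖v s‖ * Real.exp (a * s.re) := fun s ↦ by
    simp only [h, norm_smul, Complex.norm_exp, Complex.re_ofReal_mul, mul_comm ‖v s‖]
  have hle : ∀ s, ‖h s‖ ≤ ‖v s‖ * Real.exp (a * ‖s‖) := fun s ↦ by
    rw [hnorm]
    gcongr
    exact Complex.re_le_norm s
  have hhmax : IsLocalMax (norm ∘ h) 1 := hmax.mono fun s hs ↦
    (hle s).trans (hs.trans_eq (by simp [hnorm]))
  refine frequently_re_lt_norm_nhds_one ?_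
  filter_upwards [hmax, Complex.norm_eventually_eq_of_isLocalMax hh hhmax,
    hv.self_of_nhds.continuousAt.eventually_ne hv1] with s hs hhs hvs
  have : ‖v s‖ * Real.exp (a * ‖s‖) ≤ ‖v s‖ * Real.exp (a * s.re) :=
    hs.trans_eq (by rw [← hnorm, hhs, hnorm, norm_one, Complex.one_re])
  rw [mul_le_mul_iff_right₀ (norm_pos_iff.2 hvs), Real.exp_le_exp,
    mul_le_mul_iff_right₀ ha] at this
  exact this.not_gt

theorem not_isLocalMax_norm_mul_exp_div_norm [CompleteSpace E] (hc : 0 < c)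
    (hu : ∀ᶠ y in 𝓝 z, DifferentiableAt ℂ u y) (hf : ContDiffAt ℂ 1 f z)
    (hinv : (fderiv ℂ f z).IsInvertible) (hfz : f z ≠ w) (huz : u z ≠ 0) :
    ¬ IsLocalMax (fun y ↦ ‖u y‖ * Real.exp (c / ‖f y - w‖)) z := by
  intro hmax
  obtain ⟨g, hgz, hg, hfg⟩ := exists_holomorphic_section_of_isInvertible hf hinv
  -- Lifting the line `s ↦ w + s⁻¹ • (f z - w)` makes `c / ‖f - w‖` a multiple of `‖s‖`.
  let γ : ℂ → E := fun s ↦ g (w + s⁻¹ • (f z - w))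
  have hγ1 : γ 1 = z := by simp [γ, hgz]
  have hline : ∀ᶠ s : ℂ in 𝓝 1, DifferentiableAt ℂ (fun s ↦ w + s⁻¹ • (f z - w)) s := by
    filter_upwards [isOpen_ne.mem_nhds one_ne_zero] with s hs
    fun_prop (disch := assumption)
  have hlinelim : Tendsto (fun s : ℂ ↦ w + s⁻¹ • (f z - w)) (𝓝 1) (𝓝 (f z)) := by
    simpa [ContinuousAt] using hline.self_of_nhds.continuousAt
  have hγ : ∀ᶠ s in 𝓝 1, DifferentiableAt ℂ γ s := by
    filter_upwards [hline, hlinelim.eventually (hg.eventually (by simp))] with s hs hgs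
    exact (hgs.differentiableAt one_ne_zero).comp s hs
  have hγlim : Tendsto γ (𝓝 1) (𝓝 z) := by
    simpa only [ContinuousAt, hγ1] using hγ.self_of_nhds.continuousAt
  have huγ : ∀ᶠ s in 𝓝 1, DifferentiableAt ℂ (u ∘ γ) s :=
    (hγ.and (hγlim.eventually hu)).mono fun s hs ↦ hs.2.comp s hs.1
  have hweight : ∀ᶠ s in 𝓝 1, c / ‖f (γ s) - w‖ = c / ‖f z - w‖ * ‖s‖ := by
    filter_upwards [hlinelim.eventually hfg] with s hs
    rw [hs, add_sub_cancel_left, norm_smul, norm_inv, div_mul_eq_div_div, div_inv_eq_mul,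
      mul_div_right_comm]
  refine not_isLocalMax_norm_mul_exp_mul_norm huγ (by simpa [hγ1] using huz)
    (div_pos hc (norm_pos_iff.2 (sub_ne_zero.2 hfz))) ?_
  filter_upwards [hγlim.eventually hmax, hweight] with s hs hws
  simpa [← hws, hγ1] using hs

theorem norm_mul_exp_div_norm_le_of_isCompact [CompleteSpace E] {K : Set E} {M ρ : ℝ}
    (hU : IsOpen U) (hK : IsCompact K) (hKU : K ⊆ U) (hu : DifferentiableOn ℂ u U)
    (hf : DifferentiableOn ℂ f U) (hinv : ∀ y ∈ U, u y ≠ 0 → (fderiv ℂ f y).IsInvertible)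
    (hw : w ∉ f '' K) (hfr : ∀ y ∈ frontier K, ρ ≤ ‖f y - w‖) (hM : ∀ y ∈ K, ‖u y‖ ≤ M)
    (hc : 0 < c) (hρ : 0 < ρ) (hz : z ∈ K) :
    ‖u z‖ * Real.exp (c / ‖f z - w‖) ≤ M * Real.exp (c / ρ) := by
  have hfw : ∀ y ∈ K, f y ≠ w := fun y hy hyw ↦ hw ⟨y, hy, hyw⟩
  have hcont : ContinuousOn (fun y ↦ ‖u y‖ * Real.exp (c / ‖f y - w‖)) K :=
    (hu.mono hKU).continuousOn.norm.mul <| Real.continuous_exp.comp_continuousOn <|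
      continuousOn_const.div ((hf.mono hKU).continuousOn.sub continuousOn_const).norm
        fun y hy ↦ norm_ne_zero_iff.2 (sub_ne_zero.2 (hfw y hy))
  obtain ⟨x, hx, hmax⟩ := hK.exists_isMaxOn ⟨z, hz⟩ hcont
  have hxU : U ∈ 𝓝 x := hU.mem_nhds (hKU hx)
  have hM0 : 0 ≤ M := (norm_nonneg _).trans (hM z hz)
  refine (hmax hz).trans ?_
  by_cases hux : u x = 0
  · simp only [hux, norm_zero, zero_mul]
    positivity
  by_cases hxi : x ∈ interior K
  · exact absurd (hmax.isLocalMax (mem_interior_iff_mem_nhds.1 hxi))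
      (not_isLocalMax_norm_mul_exp_div_norm hc (hu.eventually_differentiableAt hxU)
        ((contDiffOn_one_of_holomorphic hU hf).contDiffAt hxU) (hinv x (hKU hx) hux)
        (hfw x hx) hux)
  · have := hM x hx
    have := hfr x ⟨subset_closure hx, hxi⟩
    beta_reduce
    gcongr

theorem eq_zero_of_notMem_image_of_norm_lt [CompleteSpace E] {K : Set E} {ρ : ℝ}
    (hU : IsOpen U) (hK : IsCompact K) (hKU : K ⊆ U) (hu : DifferentiableOn ℂ u U)
    (hf : DifferentiableOn ℂ f U) (hinv : ∀ y ∈ U, u y ≠ 0 → (fderiv ℂ f y).IsInvertible)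
    (hw : w ∉ f '' K) (hfr : ∀ y ∈ frontier K, ρ ≤ ‖f y - w‖)
    (hz : z ∈ K) (hzρ : ‖f z - w‖ < ρ) : u z = 0 := by
  obtain ⟨M, hM⟩ := hK.exists_bound_of_continuousOn (hu.mono hKU).continuousOn
  have hfz : 0 < ‖f z - w‖ := norm_pos_iff.2 (sub_ne_zero.2 fun hzw ↦ hw ⟨z, hz, hzw⟩)
  have ha : 0 < ‖f z - w‖⁻¹ - ρ⁻¹ := sub_pos.2 (inv_strictAnti₀ hfz hzρ)
  have hbound : ∀ᶠ c : ℝ in atTop, ‖u z‖ ≤ M * Real.exp (-(c * (‖f z - w‖⁻¹ - ρ⁻¹))) := by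
    filter_upwards [eventually_gt_atTop 0] with c hc
    have := norm_mul_exp_div_norm_le_of_isCompact hU hK hKU hu hf hinv hw hfr hM hc
      (hfz.trans hzρ) hz
    rw [← le_div_iff₀ (Real.exp_pos _), mul_div_assoc, ← Real.exp_sub] at this
    exact this.trans_eq (by ring_nf)
  have hlim : Tendsto (fun c : ℝ ↦ M * Real.exp (-(c * (‖f z - w‖⁻¹ - ρ⁻¹)))) atTop (𝓝 (M * 0)) :=
    (Real.tendsto_exp_neg_atTop_nhds_zero.comp (tendsto_id.atTop_mul_const ha)).const_mul M
  rw [mul_zero] at hlim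
  exact norm_le_zero_iff.1 (ge_of_tendsto hlim hbound)

end MaximumPrinciple

section Jacobian

variable {𝕜 E : Type*} [NontriviallyNormedField 𝕜] [CompleteSpace 𝕜]
  [NormedAddCommGroup E] [NormedSpace 𝕜 E] [FiniteDimensional 𝕜 E]

theorem differentiable_det : Differentiable 𝕜 (ContinuousLinearMap.det : (E →L[𝕜] E) → 𝕜) := by
  let b := finBasis 𝕜 E
  have hentry (i j : Fin (finrank 𝕜 E)) :
      Differentiable 𝕜 fun A : E →L[𝕜] E ↦ b.coord i (A (b j)) :=
    (b.coord i).toContinuousLinearMap.differentiable.comp (by fun_prop)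
  have hdet : (ContinuousLinearMap.det : (E →L[𝕜] E) → 𝕜) = fun A ↦
      ∑ σ : Equiv.Perm (Fin (finrank 𝕜 E)), (σ.sign : 𝕜) * ∏ i, b.coord (σ i) (A (b i)) := by
    ext A
    rw [ContinuousLinearMap.det, ← LinearMap.det_toMatrix b, Matrix.det_apply']
    simp only [LinearMap.toMatrix_apply, Basis.coord_apply, ContinuousLinearMap.coe_coe]
  rw [hdet]
  fun_prop

theorem isInvertible_of_det_ne_zero {A : E →L[𝕜] E} (hA : A.det ≠ 0) : A.IsInvertible :=
  ⟨A.toContinuousLinearEquivOfDetNeZero hA, A.coe_toContinuousLinearEquivOfDetNeZero hA⟩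

end Jacobian

theorem eventually_ne_of_finite_fibre {X Y : Type*} [TopologicalSpace X] [T1Space X] {f : X → Y}
    {U : Set X} {z : X} (hU : U ∈ 𝓝 z) (hfib : {y ∈ U | f y = f z}.Finite) :
    ∀ᶠ y in 𝓝[≠] z, f y ≠ f z := by
  filter_upwards [nhdsWithin_le_nhds hU,
    nhdsWithin_le_nhds ((hfib.sdiff (t := {z})).isClosed.isOpen_compl.mem_nhds (by simp)),
    self_mem_nhdsWithin] with y hyU hy hyz hfy using hy ⟨⟨hyU, hfy⟩, hyz⟩

section OpenMapping

variable {E G : Type*} [NormedAddCommGroup E] [NormedSpace ℂ E] [FiniteDimensional ℂ E]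
  [NormedAddCommGroup G] [NormedSpace ℂ G] [FiniteDimensional ℂ G] {f : E → G} {U K : Set E}
  {w : G} {ρ : ℝ}

theorem ker_fderiv_ne_bot_of_notMem_image (hdim : finrank ℂ E = finrank ℂ G) (hU : IsOpen U)
    (hf : DifferentiableOn ℂ f U) (hK : IsCompact K) (hKU : K ⊆ U) (hw : w ∉ f '' K)
    (hfr : ∀ y ∈ frontier K, ρ ≤ ‖f y - w‖) {z : E} (hz : z ∈ K) (hzρ : ‖f z - w‖ < ρ) :
    (fderiv ℂ f z).ker ≠ ⊥ := by
  have : CompleteSpace E := FiniteDimensional.complete ℂ E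
  have : CompleteSpace G := FiniteDimensional.complete ℂ G
  let e : G ≃L[ℂ] E := .ofFinrankEq hdim.symm
  have hcomp : DifferentiableOn ℂ (fun y ↦ e.toContinuousLinearMap ∘L fderiv ℂ f y) U :=
    (differentiableOn_const _).clm_comp
      ((contDiffOn_one_fderiv_of_holomorphic hU hf).differentiableOn one_ne_zero)
  have hjac := differentiable_det.comp_differentiableOn hcomp
  have hdet := eq_zero_of_notMem_image_of_norm_lt hU hK hKU hjac hf
    (fun y _ hy ↦ ContinuousLinearMap.isInvertible_equiv_comp.1 (isInvertible_of_det_ne_zero hy))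
    hw hfr hz hzρ
  simpa using (LinearMap.bot_lt_ker_of_det_eq_zero hdet).ne'

theorem ball_subset_image_of_isolated_fibres (hdim : finrank ℂ E = finrank ℂ G) (hU : IsOpen U)
    (hf : DifferentiableOn ℂ f U) (hiso : ∀ z ∈ U, ∀ᶠ y in 𝓝[≠] z, f y ≠ f z)
    (hK : IsCompact K) (hKU : K ⊆ U) {z₀ : E} (hz₀ : z₀ ∈ interior K)
    (hρ : ∀ y ∈ frontier K, ρ ≤ ‖f y - f z₀‖) : ball (f z₀) (ρ / 2) ⊆ f '' K := by
  intro w hw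
  by_contra hwK
  rw [mem_ball_iff_norm'] at hw
  have hfr : ∀ y ∈ frontier K, ρ / 2 ≤ ‖f y - w‖ := fun y hy ↦ by
    linarith [hρ y hy, norm_sub_le_norm_sub_add_norm_sub (f y) w (f z₀), norm_sub_rev w (f z₀)]
  have hV : IsOpen (interior K ∩ f ⁻¹' ball w (ρ / 2)) :=
    (hf.continuousOn.mono (interior_subset.trans hKU)).isOpen_inter_preimage isOpen_interior
      isOpen_ball
  obtain ⟨z, hz, hfreq⟩ := exists_frequently_eq_of_ker_fderiv_ne_bot hV
    ⟨z₀, hz₀, mem_ball_iff_norm.2 hw⟩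
    ((contDiffOn_one_of_holomorphic hU hf).mono fun y hy ↦ hKU (interior_subset hy.1))
    fun y hy ↦ ker_fderiv_ne_bot_of_notMem_image hdim hU hf hK hKU hwK hfr (interior_subset hy.1)
      (mem_ball_iff_norm.1 hy.2)
  exact hfreq (hiso z (hKU (interior_subset hz.1)))

theorem open_mapping_finite_fibres_general (hdim : finrank ℂ E = finrank ℂ G) (hU : IsOpen U)
    (hf : DifferentiableOn ℂ f U) (hiso : ∀ z ∈ U, ∀ᶠ y in 𝓝[≠] z, f y ≠ f z) :
    ∀ V ⊆ U, IsOpen V → IsOpen (f '' V) := by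
  intro V hVU hV
  have : ProperSpace E := FiniteDimensional.proper ℂ E
  refine isOpen_iff_mem_nhds.2 (forall_mem_image.2 fun z₀ hz₀ ↦ ?_)
  obtain ⟨r, hr, hball⟩ := nhds_basis_closedBall.mem_iff.1 <| inter_mem (hV.mem_nhds hz₀)
    (eventually_nhdsWithin_iff.1 (hiso z₀ (hVU hz₀)))
  have hKV : closedBall z₀ r ⊆ V := hball.trans inter_subset_left
  have hsphere : ∀ y ∈ sphere z₀ r, 0 < ‖f y - f z₀‖ := fun y hy ↦
    norm_pos_iff.2 <| sub_ne_zero.2 <| (hball (sphere_subset_closedBall hy)).2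
      (ne_of_mem_sphere hy hr.ne')
  have hcont : ContinuousOn (fun y ↦ ‖f y - f z₀‖) (sphere z₀ r) :=
    ((hf.continuousOn.mono ((sphere_subset_closedBall.trans hKV).trans hVU)).sub
      continuousOn_const).norm
  obtain ⟨ρ, hρ, hle⟩ := (isCompact_sphere z₀ r).exists_forall_le' hcont hsphere
  exact mem_of_superset (ball_mem_nhds _ (half_pos hρ)) <|
    (ball_subset_image_of_isolated_fibres hdim hU hf hiso (isCompact_closedBall z₀ r)
      (hKV.trans hVU) (ball_subset_interior_closedBall (mem_ball_self hr))
      fun y hy ↦ hle y (frontier_closedBall_subset_sphere hy)).trans (image_mono hKV)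

end OpenMapping

/-- Special case of the open mapping theorem: a complex analytic map
`F : U → ℂⁿ` on a domain `U ⊆ ℂⁿ` with finite fibres is an open map. -/
theorem open_mapping_finite_fibres (n : ℕ) (U : Set (Fin n → ℂ))
    (hU : IsOpen U) (hUc : IsConnected U)
    (F : (Fin n → ℂ) → (Fin n → ℂ)) (hF : ∀ z ∈ U, DifferentiableAt ℂ F z)
    (hfib : ∀ w : Fin n → ℂ, {z ∈ U | F z = w}.Finite) :
    ∀ V ⊆ U, IsOpen V → IsOpen (F '' V) :=
  open_mapping_finite_fibres_general rfl hU (fun z hz ↦ (hF z hz).differentiableWithinAt)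
    fun z hz ↦ eventually_ne_of_finite_fibre (hU.mem_nhds hz) (hfib (F z))
end

section
/- Let f ∈ ℂ[X, Y] be an irreducible polynomial in two variables with positive degree in X and positive degree in Y. Then there exists z ∈ ℂ such that f(z, exp(z)) = 0; that is, the algebraic curve {(z, w) ∈ ℂ × ℂˣ : f(z, w) = 0} contains a point of the form (z, exp(z)). -/
/-!
Suppose `F z = f (z, exp z)` has no zero. Then `F` is the exponential of an entire function, and
since `F` has exponential growth the Borel–Carathéodory theorem and Cauchy's estimates force
`F z = exp (a * z + b)`; hence `F (z + s) * F (z - s) = F z ^ 2` for all `z` and `s`. If `exp s = 1`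
only the first coordinate moves, so for each `z` the one-variable polynomial `P t = f (t, exp z)`
satisfies `P (z + s) * P (z - s) = F z ^ 2 ≠ 0` for infinitely many `s`. This is then an identity of
polynomials in `s`, so `P` is constant. But for generic `z` the degree of `P` is the degree of `f`
in `X`.
-/

open Filter Topology
open scoped Polynomial

section EntireFunctions

theorem iteratedDeriv_eq_zero_of_norm_le_pow {E : Type*} [NormedAddCommGroup E] [NormedSpace ℂ E]
    [CompleteSpace E] {g : ℂ → E} (hg : Differentiable ℂ g) {C : ℝ} {n m : ℕ}
    (hC : ∀ z, ‖g z‖ ≤ C * (1 + ‖z‖) ^ n) (hnm : n < m) : iteratedDeriv m g 0 = 0 := by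
  have hC₀ : 0 ≤ C := by simpa using (norm_nonneg _).trans (hC 0)
  have cauchy_estimate : ∀ R : ℝ, 1 ≤ R →
      ‖iteratedDeriv m g 0‖ ≤ m.factorial * (C * 2 ^ n) / R := by
    intro R hR
    have on_sphere : ∀ z ∈ Metric.sphere (0 : ℂ) R, ‖g z‖ ≤ C * (2 * R) ^ n := by
      intro z hz
      rw [mem_sphere_zero_iff_norm] at hz
      refine (hC z).trans ?_
      gcongr
      linarith
    calc ‖iteratedDeriv m g 0‖ ≤ m.factorial * (C * (2 * R) ^ n) / R ^ m :=
          Complex.norm_iteratedDeriv_le_of_forall_mem_sphere_norm_le m (by linarith)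
            hg.diffContOnCl on_sphere
      _ ≤ m.factorial * (C * (2 * R) ^ n) / R ^ (n + 1) := by
          gcongr
          exact hnm
      _ = m.factorial * (C * 2 ^ n) / R := by
          rw [mul_pow, pow_succ]
          field_simp
  have h_lim : Tendsto (fun R : ℝ => m.factorial * (C * 2 ^ n) / R) atTop (𝓝 0) :=
    tendsto_const_nhds.div_atTop tendsto_id
  exact norm_le_zero_iff.1 <| ge_of_tendsto h_lim <|
    (eventually_ge_atTop 1).mono cauchy_estimate

theorem exists_polynomial_of_norm_le_pow {g : ℂ → ℂ} (hg : Differentiable ℂ g) {C : ℝ} {n : ℕ}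
    (hC : ∀ z, ‖g z‖ ≤ C * (1 + ‖z‖) ^ n) :
    ∃ p : ℂ[X], p.natDegree ≤ n ∧ ∀ z, g z = p.eval z := by
  refine ⟨∑ k ∈ Finset.range (n + 1),
    Polynomial.monomial k ((k.factorial : ℂ)⁻¹ * iteratedDeriv k g 0), ?_, fun z => ?_⟩
  · refine Polynomial.natDegree_sum_le_of_forall_le _ _ fun k hk => ?_
    exact (Polynomial.natDegree_monomial_le _).trans (Finset.mem_range_succ_iff.1 hk)
  · rw [← Complex.taylorSeries_eq_of_entire' 0 z hg,
      tsum_eq_sum (s := Finset.range (n + 1)), Polynomial.eval_finsetSum]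
    · simp only [sub_zero, Polynomial.eval_monomial]
    · intro k hk
      rw [iteratedDeriv_eq_zero_of_norm_le_pow hg hC (by simpa using hk), mul_zero, zero_mul]

theorem exists_norm_le_pow_of_re_le_pow {g : ℂ → ℂ} (hg : Differentiable ℂ g) {A : ℝ} {n : ℕ}
    (hA : ∀ z, (g z).re ≤ A * (1 + ‖z‖) ^ n) :
    ∃ C : ℝ, ∀ z, ‖g z‖ ≤ C * (1 + ‖z‖) ^ n := by
  set B := |A| + 1
  refine ⟨2 * B * 2 ^ n + 3 * ‖g 0‖, fun z => ?_⟩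
  have re_le : Set.MapsTo g (Metric.ball 0 (2 * ‖z‖ + 1))
      {w | w.re ≤ B * (2 * (1 + ‖z‖)) ^ n} := by
    intro w hw
    rw [mem_ball_zero_iff] at hw
    calc (g w).re ≤ A * (1 + ‖w‖) ^ n := hA w
      _ ≤ B * (2 * (1 + ‖z‖)) ^ n := by
          gcongr
          · linarith [le_abs_self A]
          · linarith
  have z_mem : z ∈ Metric.ball (0 : ℂ) (2 * ‖z‖ + 1) := by
    rw [mem_ball_zero_iff]
    linarith [norm_nonneg z]
  have radius_sub : 2 * ‖z‖ + 1 - ‖z‖ = 1 + ‖z‖ := by ring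
  have one_le_growth : 1 ≤ (1 + ‖z‖) ^ n := one_le_pow₀ (by linarith [norm_nonneg z])
  calc ‖g z‖
    _ ≤ 2 * (B * (2 * (1 + ‖z‖)) ^ n) * ‖z‖ / (1 + ‖z‖) +
          ‖g 0‖ * (2 * ‖z‖ + 1 + ‖z‖) / (1 + ‖z‖) := by
        have := Complex.borelCaratheodory (by positivity) hg.differentiableOn re_le
          (by positivity) z_mem
        rwa [radius_sub] at this
    _ ≤ 2 * (B * (2 * (1 + ‖z‖)) ^ n) * (1 + ‖z‖) / (1 + ‖z‖) +
          ‖g 0‖ * (3 * (1 + ‖z‖)) / (1 + ‖z‖) := by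
        gcongr <;> linarith
    _ = 2 * B * 2 ^ n * (1 + ‖z‖) ^ n + 3 * ‖g 0‖ * 1 := by
        rw [mul_pow]
        field_simp
    _ ≤ (2 * B * 2 ^ n + 3 * ‖g 0‖) * (1 + ‖z‖) ^ n := by
        rw [add_mul]
        gcongr

theorem exists_differentiable_exp_eq {F : ℂ → ℂ} (hF : Differentiable ℂ F) (hne : ∀ z, F z ≠ 0) :
    ∃ g : ℂ → ℂ, Differentiable ℂ g ∧ ∀ z, F z = Complex.exp (g z) := by
  have logDeriv_differentiable : Differentiable ℂ (fun z => deriv F z / F z) :=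
    hF.deriv.div hF hne
  obtain ⟨g, hg₀, hg⟩ :=
    logDeriv_differentiable.isExactOn_univ.with_val_at 0 (Complex.log (F 0))
  have hasDerivAt_quotient : ∀ z, HasDerivAt (fun z => F z * Complex.exp (-g z)) 0 z := by
    intro z
    refine ((hF z).hasDerivAt.mul (hg z trivial).neg.cexp).congr_deriv ?_
    have := hne z
    field_simp
    ring
  refine ⟨g, fun z => (hg z trivial).differentiableAt, fun z => ?_⟩
  have quotient_eq_one : F z * Complex.exp (-g z) = 1 := by
    rw [is_const_of_deriv_eq_zero (fun w => (hasDerivAt_quotient w).differentiableAt)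
      (fun w => (hasDerivAt_quotient w).deriv) z 0, hg₀, Complex.exp_neg,
      Complex.exp_log (hne 0), mul_inv_cancel₀ (hne 0)]
  rwa [Complex.exp_neg, mul_inv_eq_one₀ (Complex.exp_ne_zero _)] at quotient_eq_one

theorem exists_polynomial_exp_eq_of_norm_le_exp_pow {F : ℂ → ℂ} (hF : Differentiable ℂ F)
    (hne : ∀ z, F z ≠ 0) {A : ℝ} {n : ℕ} (hA : ∀ z, ‖F z‖ ≤ Real.exp (A * (1 + ‖z‖) ^ n)) :
    ∃ p : ℂ[X], p.natDegree ≤ n ∧ ∀ z, F z = Complex.exp (p.eval z) := by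
  obtain ⟨g, hg, hFg⟩ := exists_differentiable_exp_eq hF hne
  have re_le : ∀ z, (g z).re ≤ A * (1 + ‖z‖) ^ n := fun z => by
    rw [← Real.exp_le_exp, ← Complex.norm_exp, ← hFg]
    exact hA z
  obtain ⟨C, hC⟩ := exists_norm_le_pow_of_re_le_pow hg re_le
  obtain ⟨p, hp, hgp⟩ := exists_polynomial_of_norm_le_pow hg hC
  exact ⟨p, hp, fun z => by rw [hFg, hgp]⟩

end EntireFunctions

section Polynomials

theorem eval_add_add_eval_sub_eq_two_mul_of_natDegree_le_one {R : Type*} [CommRing R] {p : R[X]}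
    (hp : p.natDegree ≤ 1) (z s : R) : p.eval (z + s) + p.eval (z - s) = 2 * p.eval z := by
  obtain ⟨a, b, rfl⟩ := Polynomial.exists_eq_X_add_C_of_natDegree_le_one hp
  simp only [Polynomial.eval_add, Polynomial.eval_mul, Polynomial.eval_C, Polynomial.eval_X]
  ring

theorem natDegree_eq_zero_of_infinite_eval_mul_eval_eq {R : Type*} [CommRing R] [IsDomain R]
    {p : R[X]} {z c : R} (hc : c ≠ 0)
    (h : {s | p.eval (z + s) * p.eval (z - s) = c}.Infinite) : p.natDegree = 0 := by
  have mul_comp_eq : p.comp (Polynomial.C z + Polynomial.X) *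
      p.comp (Polynomial.C z - Polynomial.X) = Polynomial.C c := by
    refine Polynomial.eq_of_infinite_eval_eq _ _ ?_
    simpa only [Polynomial.eval_mul, Polynomial.eval_comp, Polynomial.eval_add,
      Polynomial.eval_sub, Polynomial.eval_C, Polynomial.eval_X] using h
  have comp_mul_comp_ne_zero := mul_comp_eq.trans_ne (Polynomial.C_ne_zero.2 hc)
  have natDegree_comp_add : (p.comp (Polynomial.C z + Polynomial.X)).natDegree = 0 := by
    have := congrArg Polynomial.natDegree mul_comp_eq
    rw [Polynomial.natDegree_mul (left_ne_zero_of_mul comp_mul_comp_ne_zero)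
      (right_ne_zero_of_mul comp_mul_comp_ne_zero), Polynomial.natDegree_C] at this
    omega
  rwa [Polynomial.natDegree_comp, add_comm, Polynomial.natDegree_X_add_C, mul_one]
    at natDegree_comp_add

theorem norm_eval_le_sum_norm_coeff_mul_pow_totalDegree {𝕜 σ : Type*} [NormedField 𝕜]
    (f : MvPolynomial σ 𝕜) {x : σ → 𝕜} {r : ℝ} (hr : 1 ≤ r) (hx : ∀ i, ‖x i‖ ≤ r) :
    ‖MvPolynomial.eval x f‖ ≤ (∑ m ∈ f.support, ‖f.coeff m‖) * r ^ f.totalDegree := by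
  have monomial_le : ∀ m ∈ f.support, ‖∏ i ∈ m.support, x i ^ m i‖ ≤ r ^ f.totalDegree := by
    intro m hm
    calc ‖∏ i ∈ m.support, x i ^ m i‖ = ∏ i ∈ m.support, ‖x i‖ ^ m i := by
          simp only [norm_prod, norm_pow]
      _ ≤ ∏ i ∈ m.support, r ^ m i := by
          gcongr with i
          exact hx i
      _ = r ^ ∑ i ∈ m.support, m i := Finset.prod_pow_eq_pow_sum _ _ _
      _ ≤ r ^ f.totalDegree := pow_le_pow_right₀ hr (MvPolynomial.le_totalDegree hm)
  rw [MvPolynomial.eval_eq, Finset.sum_mul]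
  refine norm_sum_le_of_le _ fun m hm => ?_
  rw [norm_mul]
  gcongr
  exact monomial_le m hm

theorem exists_eval_exp_ne_zero {σ : Type*} {q : MvPolynomial σ ℂ} (hq : q ≠ 0) :
    ∃ x : σ → ℂ, MvPolynomial.eval (fun i => Complex.exp (x i)) q ≠ 0 := by
  by_contra! h
  refine hq (MvPolynomial.funext_set (fun _ => {0}ᶜ)
    (fun _ => (Set.finite_singleton _).infinite_compl) fun y hy => ?_)
  have exp_log_eq : (fun i => Complex.exp (Complex.log (y i))) = y :=
    funext fun i => Complex.exp_log (hy i trivial)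
  rw [map_zero, ← exp_log_eq, h]

theorem exists_polynomial_eval_cons_exp {n : ℕ} (f : MvPolynomial (Fin (n + 1)) ℂ) :
    ∃ (x : Fin n → ℂ) (P : ℂ[X]), P.natDegree = f.degreeOf 0 ∧
      ∀ t, P.eval t = MvPolynomial.eval (Fin.cons t fun i => Complex.exp (x i)) f := by
  rcases eq_or_ne f 0 with rfl | hf
  · exact ⟨0, 0, by simp, by simp⟩
  have leadingCoeff_ne_zero : (MvPolynomial.finSuccEquiv ℂ n f).leadingCoeff ≠ 0 := by
    simpa using hf
  obtain ⟨x, hx⟩ := exists_eval_exp_ne_zero leadingCoeff_ne_zero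
  refine ⟨x, (MvPolynomial.finSuccEquiv ℂ n f).map
    (MvPolynomial.eval fun i => Complex.exp (x i)), ?_, fun t => ?_⟩
  · rw [Polynomial.natDegree_map_of_leadingCoeff_ne_zero _ hx, MvPolynomial.natDegree_finSuccEquiv]
  · rw [MvPolynomial.eval_eq_eval_mv_eval']

end Polynomials

section ExponentialCurve

theorem infinite_setOf_exp_eq_one : {s : ℂ | Complex.exp s = 1}.Infinite := by
  refine Set.infinite_of_injective_forall_mem
    (f := fun k : ℤ => k * (2 * Real.pi * Complex.I)) ?_ fun k => ?_
  · exact fun j k h => by simpa [Real.pi_ne_zero] using h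
  · exact Complex.exp_eq_one_iff.2 ⟨k, rfl⟩

variable (f : MvPolynomial (Fin 2) ℂ)

theorem differentiable_eval_exp :
    Differentiable ℂ fun z => MvPolynomial.eval ![z, Complex.exp z] f := by
  intro z
  refine (AnalyticAt.aeval_mvPolynomial (f := fun z => ![z, Complex.exp z])
    (fun i => ?_) f).differentiableAt
  fin_cases i
  · exact analyticAt_id
  · exact analyticAt_cexp

theorem exists_norm_eval_exp_le :
    ∃ A : ℝ, ∀ z, ‖MvPolynomial.eval ![z, Complex.exp z] f‖ ≤ Real.exp (A * (1 + ‖z‖)) := by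
  set S := ∑ m ∈ f.support, ‖f.coeff m‖
  have S_nonneg : 0 ≤ S := by positivity
  refine ⟨S + f.totalDegree, fun z => ?_⟩
  have coord_le : ∀ i, ‖(![z, Complex.exp z] : Fin 2 → ℂ) i‖ ≤ Real.exp ‖z‖ := by
    rw [Fin.forall_fin_two]
    exact ⟨(lt_add_one _).le.trans (Real.add_one_le_exp _), Complex.norm_exp_le_exp_norm z⟩
  calc ‖MvPolynomial.eval ![z, Complex.exp z] f‖ ≤ S * Real.exp ‖z‖ ^ f.totalDegree :=
        norm_eval_le_sum_norm_coeff_mul_pow_totalDegree f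
          (Real.one_le_exp (norm_nonneg z)) coord_le
    _ ≤ Real.exp S * Real.exp ‖z‖ ^ f.totalDegree := by
        gcongr
        linarith [Real.add_one_le_exp S]
    _ = Real.exp (S + f.totalDegree * ‖z‖) := by
        rw [← Real.exp_nat_mul, ← Real.exp_add]
    _ ≤ Real.exp ((S + f.totalDegree) * (1 + ‖z‖)) := by
        gcongr
        nlinarith [mul_nonneg S_nonneg (norm_nonneg z), Nat.cast_nonneg (α := ℝ) f.totalDegree]

variable {f}

theorem eval_exp_mul_eval_exp_eq_sq (hne : ∀ z, MvPolynomial.eval ![z, Complex.exp z] f ≠ 0)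
    (z s : ℂ) :
    MvPolynomial.eval ![z + s, Complex.exp (z + s)] f *
      MvPolynomial.eval ![z - s, Complex.exp (z - s)] f =
        MvPolynomial.eval ![z, Complex.exp z] f ^ 2 := by
  obtain ⟨A, hA⟩ := exists_norm_eval_exp_le f
  obtain ⟨p, hp, hfp⟩ := exists_polynomial_exp_eq_of_norm_le_exp_pow (n := 1)
    (differentiable_eval_exp f) hne (by simpa only [pow_one] using hA)
  rw [hfp, hfp, hfp, ← Complex.exp_add,
    eval_add_add_eval_sub_eq_two_mul_of_natDegree_le_one hp, ← Complex.exp_nat_mul, Nat.cast_ofNat]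

end ExponentialCurve

theorem exponential_closedness_dim_one_general (f : MvPolynomial (Fin 2) ℂ)
    (hX : 0 < MvPolynomial.degreeOf 0 f) :
    ∃ z : ℂ, MvPolynomial.eval ![z, Complex.exp z] f = 0 := by
  by_contra! hne
  obtain ⟨x, P, hP, eval_P⟩ := exists_polynomial_eval_cons_exp f
  set z := x 0
  replace eval_P : ∀ t, P.eval t = MvPolynomial.eval ![t, Complex.exp z] f := fun t => by
    rw [eval_P, show Fin.cons t (fun i => Complex.exp (x i)) = ![t, Complex.exp z] from
      funext (Fin.forall_fin_two.2 ⟨rfl, rfl⟩)]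
  refine hX.ne' (hP.symm.trans <| natDegree_eq_zero_of_infinite_eval_mul_eval_eq (z := z)
    (pow_ne_zero 2 (hne z)) <| infinite_setOf_exp_eq_one.mono fun s hs => ?_)
  have exp_z_add_s : Complex.exp (z + s) = Complex.exp z := by
    rw [Complex.exp_add, hs, mul_one]
  have exp_z_sub_s : Complex.exp (z - s) = Complex.exp z := by
    rw [Complex.exp_sub, hs, div_one]
  rw [Set.mem_ofPred_eq, eval_P, eval_P, ← eval_exp_mul_eval_exp_eq_sq hne z s,
    exp_z_add_s, exp_z_sub_s]

/-- Exponential Closedness for `n = 1`: an irreducible polynomial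
`f ∈ ℂ[X, Y]` of positive degree in each variable has a zero of the form
`(z, exp z)`. -/
theorem exponential_closedness_dim_one (f : MvPolynomial (Fin 2) ℂ)
    (hirr : Irreducible f)
    (hX : 0 < MvPolynomial.degreeOf 0 f) (hY : 0 < MvPolynomial.degreeOf 1 f) :
    ∃ z : ℂ, MvPolynomial.eval ![z, Complex.exp z] f = 0 :=
  exponential_closedness_dim_one_general f hX
end

section
/- Let t_1, ..., t_m be real numbers that are linearly independent over ℚ, and let p ∈ ℂ[w_1, ..., w_m] be a polynomial having at least two monomials with non-zero coefficients. Then the set of complex numbers z satisfying p(exp(t_1·z), ..., exp(t_m·z)) = 0 is infinite. -/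
/-!
If an exponential polynomial `f z = ∑ l, P l z * exp (l * z)` has only finitely many zeros, dividing
them out leaves an entire function without zeros, that is `exp ∘ g` with `g` entire. Since `f` has
exponential type, `re (g z) ≤ A * ‖z‖ + B`, so `g` is affine by Borel–Carathéodory and Liouville and
`f z = P z * exp (a * z)` for a single polynomial `P`. As exponentials of distinct frequencies are
linearly independent over `ℂ[z]`, only the frequency `a` occurs in `f`. Substituting
`w i = exp (t i * z)` into a polynomial sends the monomial `w ^ d` to `exp ((∑ i, d i * t i) * z)`,
and independence of `t` makes the frequencies of distinct monomials distinct.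
-/

open Asymptotics Filter Polynomial

section Factorization

variable {E : Type*} [NormedAddCommGroup E] [NormedSpace ℂ E] [CompleteSpace E]

lemma exists_eq_sub_pow_smul_of_differentiable {f : ℂ → E} (hf : Differentiable ℂ f) (hf0 : f ≠ 0)
    (z₀ : ℂ) :
    ∃ (n : ℕ) (g : ℂ → E), Differentiable ℂ g ∧ g z₀ ≠ 0 ∧ ∀ z, f z = (z - z₀) ^ n • g z := by
  obtain ⟨p, hp⟩ := hf.analyticAt z₀
  have hp0 : p ≠ 0 := fun h ↦ hf0 <| AnalyticOnNhd.eq_of_eventuallyEq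
    (fun z _ ↦ hf.analyticAt z) (fun _ _ ↦ analyticAt_const) (hp.locally_zero_iff.mpr h)
  have hdslope (n : ℕ) : Differentiable ℂ ((Function.swap dslope z₀)^[n] f) := by
    induction n with
    | zero => exact hf
    | succ n ih =>
      rw [Function.iterate_succ_apply', ← differentiableOn_univ]
      exact (Complex.differentiableOn_dslope univ_mem).mpr ih.differentiableOn
  exact ⟨p.order, _, hdslope _, hp.iterate_dslope_fslope_ne_zero hp0,
    hp.eq_pow_order_mul_iterate_dslope⟩

lemma exists_eq_eval_smul_of_finite_zeros {f : ℂ → E} (hf : Differentiable ℂ f)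
    (hfin : {z | f z = 0}.Finite) :
    ∃ (P : ℂ[X]) (g : ℂ → E), P ≠ 0 ∧ Differentiable ℂ g ∧ (∀ z, g z ≠ 0) ∧
      ∀ z, f z = P.eval z • g z := by
  obtain ⟨s, hs⟩ : ∃ s : Finset ℂ, ∀ z, f z = 0 → z ∈ s := ⟨hfin.toFinset, by simp⟩
  induction s using Finset.induction_on generalizing f with
  | empty => exact ⟨1, f, one_ne_zero, hf, fun z hz ↦ by simpa using hs z hz, by simp⟩
  | insert z₀ s _ ih =>
    have hf0 : f ≠ 0 := by
      rintro rfl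
      exact Set.infinite_univ (by simpa using hfin)
    obtain ⟨n, g, hg, hgz₀, hfg⟩ := exists_eq_sub_pow_smul_of_differentiable hf hf0 z₀
    have hzero {z : ℂ} (hz : g z = 0) : f z = 0 := by rw [hfg, hz, smul_zero]
    obtain ⟨P, h, hP, hh, hh0, hgh⟩ := ih hg (hfin.subset fun _ ↦ hzero) fun z hz ↦
      Finset.mem_of_mem_insert_of_ne (hs z (hzero hz)) (by rintro rfl; exact hgz₀ hz)
    refine ⟨(X - C z₀) ^ n * P, h, mul_ne_zero (pow_ne_zero n (X_sub_C_ne_zero z₀)) hP, hh, hh0,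
      fun z ↦ ?_⟩
    simp [hfg, hgh, mul_smul]

end Factorization

lemma exists_eq_exp_of_differentiable {f : ℂ → ℂ} (hf : Differentiable ℂ f) (hf0 : ∀ z, f z ≠ 0) :
    ∃ g : ℂ → ℂ, Differentiable ℂ g ∧ ∀ z, f z = Complex.exp (g z) := by
  have hlogDeriv : Differentiable ℂ (logDeriv f) := fun z ↦
    (hf.analyticAt z).deriv.differentiableAt.div (hf z) (hf0 z)
  obtain ⟨g, hg0, hg⟩ := hlogDeriv.isExactOn_univ.with_val_at 0 (Complex.log (f 0))
  replace hg (z : ℂ) : HasDerivAt g (logDeriv f z) z := hg z (Set.mem_univ z)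
  have hderiv (z : ℂ) : HasDerivAt (fun w ↦ f w * Complex.exp (-g w)) 0 z := by
    convert! (hf z).hasDerivAt.mul (hg z).neg.cexp using 1
    rw [logDeriv_apply]
    field_simp [hf0 z]
    ring
  have hconst (z : ℂ) : f z * Complex.exp (-g z) = f 0 * Complex.exp (-g 0) :=
    is_const_of_deriv_eq_zero (fun z ↦ (hderiv z).differentiableAt) (fun z ↦ (hderiv z).deriv) z 0
  refine ⟨g, fun z ↦ (hg z).differentiableAt, fun z ↦ ?_⟩
  simp only [Complex.exp_neg, hg0, Complex.exp_log (hf0 0), mul_inv_cancel₀ (hf0 0)] at hconst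
  exact (mul_inv_eq_one₀ (Complex.exp_ne_zero _)).mp (hconst z)

section LinearGrowth

lemma eq_add_smul_of_norm_sub_le {E : Type*} [NormedAddCommGroup E] [NormedSpace ℂ E]
    [CompleteSpace E] {g : ℂ → E} (hg : Differentiable ℂ g) {C : ℝ}
    (hC : ∀ z, ‖g z - g 0‖ ≤ C * ‖z‖) : ∃ a : E, ∀ z, g z = g 0 + z • a := by
  have hslope : Differentiable ℂ (dslope g 0) := differentiableOn_univ.mp <|
    (Complex.differentiableOn_dslope univ_mem).mpr hg.differentiableOn
  have hbound (z : ℂ) : ‖dslope g 0 z‖ ≤ max C ‖deriv g 0‖ := by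
    obtain rfl | hz := eq_or_ne z 0
    · simp
    · rw [dslope_of_ne _ hz, slope_def_module, norm_smul, norm_inv, sub_zero,
        inv_mul_le_iff₀ (norm_pos_iff.mpr hz), mul_comm]
      exact (hC z).trans (by gcongr; exact le_max_left _ _)
  obtain ⟨a, ha⟩ := hslope.exists_const_forall_eq_of_bounded
    (isBounded_iff_forall_norm_le.mpr ⟨_, Set.forall_mem_range.mpr hbound⟩)
  refine ⟨a, fun z ↦ ?_⟩
  rw [← ha z, ← sub_eq_iff_eq_add']
  simpa using (sub_smul_dslope g 0 z).symm

lemma exists_norm_sub_le_of_re_le {g : ℂ → ℂ} (hg : Differentiable ℂ g) {A B : ℝ}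
    (h : ∀ z, (g z).re ≤ A * ‖z‖ + B) : ∃ C, ∀ z, ‖g z - g 0‖ ≤ C * ‖z‖ := by
  set D := |B| + ‖g 0‖ + 1
  refine ⟨2 * (2 * |A| + D), fun z ↦ ?_⟩
  -- On the ball of radius `2 * ‖z‖ + 1`, the distance `‖z‖ + 1` from `z` to the boundary is
  -- comparable to the bound for the real part, uniformly down to `z = 0`.
  have hre (w : ℂ) (hw : w ∈ Metric.ball 0 (2 * ‖z‖ + 1)) :
      (g w - g 0).re ≤ |A| * (2 * ‖z‖ + 1) + D := by
    have h0 := (neg_le_abs _).trans (Complex.abs_re_le_norm (g 0))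
    calc (g w - g 0).re ≤ A * ‖w‖ + B + ‖g 0‖ := by rw [Complex.sub_re]; linarith [h w]
      _ ≤ |A| * (2 * ‖z‖ + 1) + (|B| + ‖g 0‖ + 1) := by
        have := (mem_ball_zero_iff.mp hw).le
        have : A * ‖w‖ ≤ |A| * (2 * ‖z‖ + 1) := by gcongr; exact le_abs_self A
        linarith [le_abs_self B]
  have hBC := Complex.borelCaratheodory_zero (f := fun w ↦ g w - g 0) (by positivity)
    (hg.sub_const _).differentiableOn hre (by positivity)
    (mem_ball_zero_iff.mpr (by linarith [norm_nonneg z])) (sub_self _)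
  refine hBC.trans ((div_le_iff₀ (by linarith [norm_nonneg z])).mpr ?_)
  have hD : 0 ≤ D := by positivity
  have : |A| * (2 * ‖z‖ + 1) + D ≤ (2 * |A| + D) * (2 * ‖z‖ + 1 - ‖z‖) := by
    nlinarith [norm_nonneg z, abs_nonneg A]
  calc 2 * (|A| * (2 * ‖z‖ + 1) + D) * ‖z‖
      ≤ 2 * ((2 * |A| + D) * (2 * ‖z‖ + 1 - ‖z‖)) * ‖z‖ := by gcongr
    _ = 2 * (2 * |A| + D) * ‖z‖ * (2 * ‖z‖ + 1 - ‖z‖) := by ring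

end LinearGrowth

/-- Finite exponential type: `f` grows at most like `exp (A * ‖z‖)` at infinity for some `A`. No
regularity of `f` is included. -/
def HasExponentialType (f : ℂ → ℂ) : Prop :=
  ∃ A : ℝ, f =O[cocompact ℂ] fun z ↦ Real.exp (A * ‖z‖)

namespace HasExponentialType

variable {f g : ℂ → ℂ}

protected lemma add (hf : HasExponentialType f) (hg : HasExponentialType g) :
    HasExponentialType (f + g) := by
  obtain ⟨A, hA⟩ := hf
  obtain ⟨B, hB⟩ := hg
  have hmono {A' B' : ℝ} (h : A' ≤ B') :
      (fun z : ℂ ↦ Real.exp (A' * ‖z‖)) =O[cocompact ℂ] fun z ↦ Real.exp (B' * ‖z‖) :=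
    isBigO_of_le _ fun z ↦ by simpa using mul_le_mul_of_nonneg_right h (norm_nonneg z)
  exact ⟨max A B, (hA.trans (hmono (le_max_left A B))).add (hB.trans (hmono (le_max_right A B)))⟩

protected lemma mul (hf : HasExponentialType f) (hg : HasExponentialType g) :
    HasExponentialType (f * g) := by
  obtain ⟨A, hA⟩ := hf
  obtain ⟨B, hB⟩ := hg
  exact ⟨A + B, by simpa only [add_mul, Real.exp_add, Pi.mul_def] using hA.mul hB⟩

protected lemma const (c : ℂ) : HasExponentialType fun _ ↦ c :=
  ⟨0, by simpa using isBigO_const_const c (one_ne_zero (α := ℝ)) _⟩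

protected lemma sum {ι : Type*} {s : Finset ι} {F : ι → ℂ → ℂ}
    (hF : ∀ i ∈ s, HasExponentialType (F i)) : HasExponentialType (∑ i ∈ s, F i) :=
  Finset.sum_induction F _ (fun _ _ ↦ .add) (.const 0) hF

protected lemma id : HasExponentialType fun z ↦ z :=
  ⟨1, isBigO_of_le _ fun z ↦ by
    simpa using (le_add_of_nonneg_right zero_le_one).trans (Real.add_one_le_exp ‖z‖)⟩

lemma polynomial_eval (P : ℂ[X]) : HasExponentialType P.eval := by
  induction P using Polynomial.induction_on with
  | C a => simpa using HasExponentialType.const a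
  | add p q hp hq => simpa [Pi.add_def] using hp.add hq
  | monomial n a h => simpa [pow_succ, Pi.mul_def, mul_assoc] using h.mul .id

lemma exp_mul (l : ℂ) : HasExponentialType fun z ↦ Complex.exp (l * z) :=
  ⟨‖l‖, isBigO_of_le _ fun z ↦ by
    simpa [Complex.norm_exp] using (Complex.re_le_norm (l * z)).trans (norm_mul l z).le⟩

lemma of_isBigO (hg : HasExponentialType g) (hfg : f =O[cocompact ℂ] g) : HasExponentialType f :=
  hg.imp fun _ ↦ hfg.trans

lemma exists_re_le (hg : Continuous g) (h : HasExponentialType fun z ↦ Complex.exp (g z)) :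
    ∃ A B : ℝ, ∀ z, (g z).re ≤ A * ‖z‖ + B := by
  obtain ⟨A, hA⟩ := h
  obtain ⟨c, hc, hcA⟩ := hA.exists_pos
  obtain ⟨K, hK, hKA⟩ := mem_cocompact.mp hcA.bound
  obtain ⟨M, hM⟩ := hK.bddAbove_image (f := fun z ↦ (g z).re - A * ‖z‖) (by fun_prop)
  refine ⟨A, max M (Real.log c), fun z ↦ ?_⟩
  rw [← sub_le_iff_le_add']
  by_cases hz : z ∈ K
  · exact (hM ⟨z, hz, rfl⟩).trans (le_max_left _ _)
  · have hexp : Real.exp (g z).re ≤ c * Real.exp (A * ‖z‖) := by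
      simpa [Complex.norm_exp] using hKA hz
    rw [← Real.exp_log hc, ← Real.exp_add, Real.exp_le_exp] at hexp
    exact (sub_le_iff_le_add.mpr hexp).trans (le_max_right _ _)

end HasExponentialType

lemma one_isBigO_polynomial_eval {𝕜 : Type*} [NormedField 𝕜] [ProperSpace 𝕜] {P : 𝕜[X]}
    (hP : P ≠ 0) : (1 : 𝕜 → 𝕜) =O[cocompact 𝕜] P.eval := by
  obtain hdeg | hdeg := lt_or_ge 0 P.degree
  · have htop := P.tendsto_norm_atTop hdeg (tendsto_norm_cocompact_atTop (E := 𝕜))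
    exact ((isLittleO_const_left_of_ne one_ne_zero).mpr htop).isBigO
  · rw [eq_C_of_degree_le_zero hdeg] at hP ⊢
    simpa [Pi.one_def] using isBigO_const_const (1 : 𝕜) (C_ne_zero.mp hP) _

lemma exists_eq_eval_mul_exp_of_finite_zeros {f : ℂ → ℂ} (hf : Differentiable ℂ f)
    (hexp : HasExponentialType f) (hfin : {z | f z = 0}.Finite) :
    ∃ (P : ℂ[X]) (a : ℂ), ∀ z, f z = P.eval z * Complex.exp (a * z) := by
  obtain ⟨P, F, hP, hF, hF0, hfF⟩ := exists_eq_eval_smul_of_finite_zeros hf hfin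
  obtain ⟨g, hg, hFg⟩ := exists_eq_exp_of_differentiable hF hF0
  have hgf : (fun z ↦ Complex.exp (g z)) =O[cocompact ℂ] f := by
    refine ((one_isBigO_polynomial_eval hP).mul (isBigO_refl F _)).congr ?_ ?_ <;>
      simp [hfF, hFg]
  obtain ⟨A, B, hAB⟩ := (hexp.of_isBigO hgf).exists_re_le hg.continuous
  obtain ⟨c, hc⟩ := exists_norm_sub_le_of_re_le hg hAB
  obtain ⟨a, ha⟩ := eq_add_smul_of_norm_sub_le hg hc
  refine ⟨C (Complex.exp (g 0)) * P, a, fun z ↦ ?_⟩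
  rw [hfF, hFg, ha, Complex.exp_add, eval_mul, eval_C, smul_eq_mul, smul_eq_mul, mul_comm z a]
  ring

/-- The operator `P ↦ P' + μ P`, which is what differentiation of `P z * exp (μ * z)` does to the
coefficient `P`. -/
noncomputable def twistedDerivative {R : Type*} [Semiring R] (μ : R) (P : R[X]) : R[X] :=
  derivative P + C μ * P

section TwistedDerivative

variable {R : Type*} [Semiring R]

lemma twistedDerivative_zero_left : twistedDerivative (0 : R) = derivative := by
  ext1 P
  simp [twistedDerivative]

lemma twistedDerivative_ne_zero [NoZeroDivisors R] {μ : R} (hμ : μ ≠ 0) {P : R[X]} (hP : P ≠ 0) :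
    twistedDerivative μ P ≠ 0 := by
  have hdeg : P.derivative.degree < (C μ * P).degree := by
    rw [degree_C_mul hμ]
    exact degree_derivative_lt hP
  rw [twistedDerivative, ← degree_ne_bot, degree_add_eq_right_of_degree_lt hdeg]
  simp [hμ, hP]

lemma iterate_twistedDerivative_ne_zero [NoZeroDivisors R] {μ : R} (hμ : μ ≠ 0) {P : R[X]}
    (hP : P ≠ 0) (n : ℕ) : (twistedDerivative μ)^[n] P ≠ 0 := by
  induction n with
  | zero => exact hP
  | succ n ih =>
    rw [Function.iterate_succ_apply']
    exact twistedDerivative_ne_zero hμ ih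

end TwistedDerivative

lemma hasDerivAt_eval_mul_exp (P : ℂ[X]) (l z : ℂ) :
    HasDerivAt (fun w ↦ P.eval w * Complex.exp (l * w))
      ((twistedDerivative l P).eval z * Complex.exp (l * z)) z := by
  convert! (P.hasDerivAt z).mul ((hasDerivAt_id z).const_mul l).cexp using 1
  simp only [twistedDerivative, eval_add, eval_mul, eval_C, id]
  ring

section LinearIndependence

variable {ι : Type*} {S : Finset ι} {l : ι → ℂ} {P : ι → ℂ[X]}

lemma sum_iterate_twistedDerivative_eq_zero
    (h : ∀ z, ∑ i ∈ S, (P i).eval z * Complex.exp (l i * z) = 0) (n : ℕ) (z : ℂ) :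
    ∑ i ∈ S, ((twistedDerivative (l i))^[n] (P i)).eval z * Complex.exp (l i * z) = 0 := by
  induction n generalizing z with
  | zero => exact h z
  | succ n ih =>
    simp only [Function.iterate_succ_apply']
    refine (HasDerivAt.fun_sum fun i _ ↦ hasDerivAt_eval_mul_exp _ (l i) z).unique ?_
    simpa only [ih] using hasDerivAt_const z (0 : ℂ)

-- Dividing by `exp (l k * z)` turns the `k`-th term into a polynomial, which differentiating often
-- enough kills.
lemma sum_iterate_twistedDerivative_sub_eq_zero_of_insert [DecidableEq ι] {k : ι} (hk : k ∉ S)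
    (h : ∀ z, ∑ i ∈ insert k S, (P i).eval z * Complex.exp (l i * z) = 0) {n : ℕ}
    (hn : (P k).natDegree < n) (z : ℂ) :
    ∑ i ∈ S, ((twistedDerivative (l i - l k))^[n] (P i)).eval z *
      Complex.exp ((l i - l k) * z) = 0 := by
  have hshift (w : ℂ) : ∑ i ∈ insert k S, (P i).eval w * Complex.exp ((l i - l k) * w) = 0 := by
    simp only [sub_mul, Complex.exp_sub, ← mul_div_assoc, ← Finset.sum_div, h, zero_div]
  have hsum := sum_iterate_twistedDerivative_eq_zero hshift n z
  rwa [Finset.sum_insert hk, sub_self, twistedDerivative_zero_left,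
    iterate_derivative_eq_zero hn, eval_zero, zero_mul, zero_add] at hsum

lemma eq_zero_of_sum_eval_mul_exp_eq_zero (hl : Set.InjOn l S)
    (h : ∀ z, ∑ i ∈ S, (P i).eval z * Complex.exp (l i * z) = 0) : ∀ i ∈ S, P i = 0 := by
  classical
  induction S using Finset.induction_on generalizing P l with
  | empty => simp
  | insert k S hk ih =>
    rw [Finset.coe_insert, Set.injOn_insert (by simpa using hk)] at hl
    obtain ⟨hinj, hlk⟩ := hl
    have hS (i : ι) (hi : i ∈ S) : P i = 0 := by
      have hne : l i - l k ≠ 0 := sub_ne_zero.mpr fun hik ↦ hlk ⟨i, hi, hik⟩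
      by_contra hPi
      exact iterate_twistedDerivative_ne_zero hne hPi _ <|
        ih (fun a ha b hb hab ↦ hinj ha hb (sub_left_injective hab))
          (sum_iterate_twistedDerivative_sub_eq_zero_of_insert hk h (Nat.lt_succ_self _)) i hi
    have hPk : P k = 0 := Polynomial.funext fun z ↦ by
      have hz := h z
      rw [Finset.sum_insert hk, Finset.sum_eq_zero fun i hi ↦ by rw [hS i hi, eval_zero, zero_mul],
        add_zero] at hz
      simpa using hz
    exact Finset.forall_mem_insert .. |>.mpr ⟨hPk, hS⟩

end LinearIndependence

/-- The exponential polynomial `z ↦ ∑ l, f l z * exp (l * z)`, encoded by its finitely supported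
family of polynomial coefficients `f`, indexed by the frequencies `l`. -/
noncomputable def expPoly (f : ℂ →₀ ℂ[X]) (z : ℂ) : ℂ :=
  f.sum fun l P ↦ P.eval z * Complex.exp (l * z)

lemma expPoly_single (a : ℂ) (P : ℂ[X]) (z : ℂ) :
    expPoly (Finsupp.single a P) z = P.eval z * Complex.exp (a * z) := by
  simp [expPoly]

lemma expPoly_injective : Function.Injective expPoly := by
  intro f g hfg
  rw [← sub_eq_zero]
  have hsum (z : ℂ) : expPoly (f - g) z = 0 := by
    rw [expPoly, Finsupp.sum_sub_index (by simp [sub_mul]), sub_eq_zero]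
    exact congr_fun hfg z
  ext1 l
  by_cases hl : l ∈ (f - g).support
  · exact eq_zero_of_sum_eval_mul_exp_eq_zero (l := id) (Set.injOn_id _) hsum l hl
  · exact Finsupp.notMem_support_iff.mp hl

lemma differentiable_expPoly (f : ℂ →₀ ℂ[X]) : Differentiable ℂ (expPoly f) :=
  Differentiable.fun_sum fun l _ z ↦ (hasDerivAt_eval_mul_exp (f l) l z).differentiableAt

lemma hasExponentialType_expPoly (f : ℂ →₀ ℂ[X]) : HasExponentialType (expPoly f) := by
  have h := HasExponentialType.sum (s := f.support) fun l _ ↦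
    (HasExponentialType.polynomial_eval (f l)).mul (.exp_mul l)
  convert! h using 1
  ext z
  simp [expPoly, Finsupp.sum]

theorem infinite_setOf_expPoly_eq_zero {f : ℂ →₀ ℂ[X]} (hf : 2 ≤ f.support.card) :
    {z | expPoly f z = 0}.Infinite := by
  intro hfin
  obtain ⟨P, a, hPa⟩ := exists_eq_eval_mul_exp_of_finite_zeros (differentiable_expPoly f)
    (hasExponentialType_expPoly f) hfin
  have hsingle : f = Finsupp.single a P :=
    expPoly_injective (funext fun z ↦ by rw [hPa, expPoly_single])
  have := Finsupp.card_support_le_one'.mpr ⟨a, P, hsingle⟩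
  omega

section Substitution

variable {σ : Type*} (t : σ → ℂ) (p : MvPolynomial σ ℂ)

/-- The coefficients, by frequency, of the exponential polynomial obtained from `p` by substituting
`exp (t i * z)` for the `i`-th variable. -/
noncomputable def expSubst : ℂ →₀ ℂ[X] :=
  (Finsupp.mapRange C C_0 (AddMonoidAlgebra.coeff p)).mapDomain (Finsupp.linearCombination ℕ t)

lemma expPoly_expSubst (z : ℂ) :
    expPoly (expSubst t p) z = MvPolynomial.eval (fun i ↦ Complex.exp (t i * z)) p := by
  rw [expPoly, expSubst, Finsupp.sum_mapDomain_index (by simp) (by simp [add_mul]),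
    Finsupp.sum_mapRange_index (by simp), MvPolynomial.eval_eq]
  refine Finset.sum_congr rfl fun d _ ↦ ?_
  beta_reduce
  rw [eval_C, Finsupp.linearCombination_apply, Finsupp.sum, Finset.sum_mul, Complex.exp_sum]
  simp only [nsmul_eq_mul, mul_assoc, Complex.exp_nat_mul]
  rfl

variable {t} in
lemma card_support_expSubst (ht : LinearIndependent ℕ t) :
    (expSubst t p).support.card = p.support.card := by
  classical
  rw [expSubst, Finsupp.mapDomain_support_of_injective ht, Finset.card_image_of_injective _ ht,
    Finsupp.support_mapRange_of_injective C_0 _ C_injective]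
  rfl

end Substitution

theorem exp_poly_infinitely_many_zeroes_general {σ : Type*} {t : σ → ℂ}
    (hindep : LinearIndependent ℚ t) {p : MvPolynomial σ ℂ} (hp : 2 ≤ p.support.card) :
    {z : ℂ | MvPolynomial.eval (fun i ↦ Complex.exp (t i * z)) p = 0}.Infinite := by
  simp only [← expPoly_expSubst]
  rw [← card_support_expSubst p (hindep.restrict_scalars' ℕ)] at hp
  exact infinite_setOf_expPoly_eq_zero hp

/-- If `t₁, ..., tₘ` are `ℚ`-linearly independent reals and `p` is a polynomial
with at least two monomials, then `p(e^{t₁ z}, ..., e^{tₘ z})` has infinitely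
many zeroes. -/
theorem exp_poly_infinitely_many_zeroes (m : ℕ) (t : Fin m → ℝ)
    (hindep : LinearIndependent ℚ t)
    (p : MvPolynomial (Fin m) ℂ) (hp : 2 ≤ p.support.card) :
    {z : ℂ | MvPolynomial.eval (fun i => Complex.exp (t i * z)) p = 0}.Infinite :=
  exp_poly_infinitely_many_zeroes_general (hindep.map'
    (Complex.ofRealAm.toLinearMap.restrictScalars ℚ)
    (LinearMap.ker_eq_bot.mpr Complex.ofReal_injective)) hp
end
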